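/- Fix r₀ > 0. For every ε > 0 the Dirichlet problem Δu = 4π²·ε⁻²·(exp(2u) − r²·exp(−2u)) in B_{2r₀}(0) ⊂ ℝ² (where r = |x|), with boundary value u = (1/2)·ln(2r₀) on ∂B_{2r₀}(0), has a unique smooth radially symmetric solution u_ε, and it satisfies: (1) setting v_ε(r) = u_ε(r) − (1/2)·ln r for r ∈ [r₀, 2r₀], for any integers l > k ≥ 0 there is a constant C = C(r₀, l, k) such that for all 0 < ε < 1/8, sup_{r ∈ [r₀, 2r₀]} |v_ε^{(k)}(r)| ≤ C·ε^{l−k}; and (2) for any integer k ≥ 0 and any 0 < R ≤ 2r₀ there is a constant C = C(r₀, R, k) such that for all 0 < ε < 1/8, the C^k norm of u_ε on B_R(0) (the supremum over B_R(0) of all partial derivatives of order at most k) is at most C·ε^{−k−2}. -/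

import Mathlib

open Real Set Metric

/-- The Euclidean Laplacian of `u : ℝ² → ℝ`. -/
noncomputable def laplacian2 (u : EuclideanSpace ℝ (Fin 2) → ℝ)
    (x : EuclideanSpace ℝ (Fin 2)) : ℝ :=
  ∑ i : Fin 2,
    fderiv ℝ (fun y => fderiv ℝ u y (EuclideanSpace.single i 1)) x (EuclideanSpace.single i 1)

/-- `u` is a solution of the Dirichlet problem
`Δu = 4π²·ε⁻²·(exp(2u) − r²·exp(−2u))` in `B_{2r₀}(0)`, `u = (1/2)·ln(2r₀)` on the
boundary: continuous on the closed disc, smooth on the open disc, satisfying the equation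
pointwise and the boundary condition. -/
def IsDirichletSolR (r₀ ε : ℝ) (u : EuclideanSpace ℝ (Fin 2) → ℝ) : Prop :=
  ContinuousOn u (closedBall 0 (2 * r₀)) ∧
  ContDiffOn ℝ (⊤ : ℕ∞) u (ball 0 (2 * r₀)) ∧
  (∀ x ∈ ball (0 : EuclideanSpace ℝ (Fin 2)) (2 * r₀),
    laplacian2 u x =
      4 * π ^ 2 * (ε ^ 2)⁻¹ * (Real.exp (2 * u x) - ‖x‖ ^ 2 * Real.exp (-(2 * u x)))) ∧
  (∀ x ∈ sphere (0 : EuclideanSpace ℝ (Fin 2)) (2 * r₀), u x = (1/2) * Real.log (2 * r₀))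

/-- `u` is radially symmetric on the closed disc of radius `2r₀`, with radial profile `g`. -/
def IsRadialR (r₀ : ℝ) (u : EuclideanSpace ℝ (Fin 2) → ℝ) (g : ℝ → ℝ) : Prop :=
  ∀ x ∈ closedBall (0 : EuclideanSpace ℝ (Fin 2)) (2 * r₀), u x = g ‖x‖

/-!
In the variable `t = r²` a radial solution `u(x) = h(|x|²)` satisfies the singular equation
`(t h')' = (2κ)⁻² (exp (2h) - t exp (-2h))` with `κ = ε / (2π)`. Its solutions smooth at `t = 0` are
parametrized by `h 0`; a Volterra fixed point and shooting on this parameter, with the right-hand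
side truncated at the barriers, give existence. The right-hand side is increasing in `u`, so any two
solutions of the Dirichlet problem agree by the maximum principle, and each of them is such a
profile.

The excess `w = h - ¼ log t` is nonnegative and decreasing. Integrating the equation bounds `w` by
`κ²` times the slope defect `1/4 - t h'`, and the slope defect by `w` on a larger interval, so
alternating the two estimates gains a factor `κ²` at each step. Near the origin the natural length
scale in `t` is `κ (κ + √t)`, and differentiating the equation bounds each derivative of `h` by the
corresponding inverse power of that scale. Interpolating between fast decay of `w` and polynomial
growth of its derivatives makes all derivatives decay.
-/

section ParametricIntegral

theorem hasDerivAt_parametric_intervalIntegral {F : ℝ × ℝ → ℝ} (hF : ContDiff ℝ 1 F)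
    (a b s : ℝ) :
    HasDerivAt (fun s => ∫ τ in a..b, F (s, τ)) (∫ τ in a..b, fderiv ℝ F (s, τ) (1, 0)) s := by
  have hF' : Continuous fun p => fderiv ℝ F p (1, 0) :=
    (hF.continuous_fderiv one_ne_zero).clm_apply continuous_const
  have hcont := hF.continuous
  obtain ⟨C, hC⟩ := (isCompact_Icc.prod isCompact_uIcc).exists_bound_of_continuousOn
    (s := Icc (s - 1) (s + 1) ×ˢ uIcc a b) hF'.continuousOn
  refine (intervalIntegral.hasDerivAt_integral_of_dominated_loc_of_deriv_le
    (F := fun s τ => F (s, τ)) (F' := fun s τ => fderiv ℝ F (s, τ) (1, 0)) (bound := fun _ => C)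
    (Icc_mem_nhds (sub_one_lt s) (lt_add_one s)) ?_ ?_ ?_ ?_ ?_ ?_).2
  · exact .of_forall fun s => (by fun_prop : Continuous fun τ => F (s, τ)).aestronglyMeasurable
  · exact (by fun_prop : Continuous fun τ => F (s, τ)).intervalIntegrable _ _
  · exact (by fun_prop : Continuous fun τ => fderiv ℝ F (s, τ) (1, 0)).aestronglyMeasurable
  · exact .of_forall fun τ hτ σ hσ => hC (σ, τ) ⟨hσ, uIoc_subset_uIcc hτ⟩
  · exact intervalIntegrable_const
  · refine .of_forall fun τ _ σ _ => ?_
    exact (hF.differentiable one_ne_zero (σ, τ)).hasFDerivAt.comp_hasDerivAt σ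
      ((hasDerivAt_id σ).prodMk (hasDerivAt_const σ τ))

theorem contDiff_parametric_intervalIntegral {n : ℕ} {F : ℝ × ℝ → ℝ} (hF : ContDiff ℝ n F)
    (a b : ℝ) : ContDiff ℝ n fun s => ∫ τ in a..b, F (s, τ) := by
  induction n generalizing F with
  | zero =>
    have hcont : Continuous F := hF.continuous
    refine contDiff_zero.2 ?_
    apply intervalIntegral.continuous_parametric_intervalIntegral_of_continuous'
    exact hcont
  | succ n ih =>
    have hderiv := hasDerivAt_parametric_intervalIntegral
      (hF.of_le (by exact_mod_cast Nat.le_add_left 1 n)) a b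
    push_cast at hF ⊢
    refine contDiff_succ_iff_deriv.2 ⟨fun s => (hderiv s).differentiableAt, by simp, ?_⟩
    rw [funext fun s => (hderiv s).deriv]
    exact ih ((hF.fderiv_right le_rfl).clm_apply contDiff_const)

end ParametricIntegral

section SegmentMean

/-- The mean value of `g` over the segment from `0` to `s`. As a function of `s` it is the solution
`m` of `s m' + m = g` that is regular at `0`. -/
noncomputable def segmentMean (g : ℝ → ℝ) (s : ℝ) : ℝ :=
  ∫ τ in (0 : ℝ)..1, g (s * τ)

theorem contDiff_segmentMean {n : ℕ} {g : ℝ → ℝ} (hg : ContDiff ℝ n g) :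
    ContDiff ℝ n (segmentMean g) :=
  contDiff_parametric_intervalIntegral (F := fun p => g (p.1 * p.2))
    (hg.comp (contDiff_fst.mul contDiff_snd)) 0 1

theorem continuous_segmentMean {g : ℝ → ℝ} (hg : Continuous g) : Continuous (segmentMean g) :=
  (contDiff_segmentMean (n := 0) (contDiff_zero.2 hg)).continuous

theorem hasDerivAt_mul_segmentMean {g : ℝ → ℝ} (hg : Continuous g) (s : ℝ) :
    HasDerivAt (fun s => s * segmentMean g s) (g s) s := by
  have hprimitive : (fun s => s * segmentMean g s) = fun s => ∫ σ in (0 : ℝ)..s, g σ := by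
    ext s
    simp [segmentMean]
  rw [hprimitive]
  exact hg.integral_hasStrictDerivAt 0 s |>.hasDerivAt

theorem abs_segmentMean_le {g : ℝ → ℝ} {s c : ℝ} (hg : ∀ σ, |σ| ≤ |s| → |g σ| ≤ c) :
    |segmentMean g s| ≤ c := by
  have hbound : ∀ τ ∈ uIoc (0 : ℝ) 1, ‖g (s * τ)‖ ≤ c := fun τ hτ => by
    rw [uIoc_of_le zero_le_one] at hτ
    refine hg _ ?_
    rw [abs_mul, abs_of_pos hτ.1]
    exact mul_le_of_le_one_right (abs_nonneg s) hτ.2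
  simpa [segmentMean] using intervalIntegral.norm_integral_le_of_norm_le_const hbound

theorem segmentMean_sub {g k : ℝ → ℝ} (hg : Continuous g) (hk : Continuous k) (s : ℝ) :
    segmentMean (fun σ => g σ - k σ) s = segmentMean g s - segmentMean k s :=
  intervalIntegral.integral_sub
    ((by fun_prop : Continuous fun τ => g (s * τ)).intervalIntegrable _ _)
    ((by fun_prop : Continuous fun τ => k (s * τ)).intervalIntegrable _ _)

end SegmentMean

section Volterra

open scoped NNReal BoundedContinuousFunction

/-- The integrated form of `t h'' + h' = G (t, h)`, `h 0 = a`: its fixed points are the solutions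
that are regular at the singular point `t = 0`. -/
noncomputable def volterraMap (G : ℝ × ℝ → ℝ) (a : ℝ) (k : ℝ → ℝ) (t : ℝ) : ℝ :=
  a + ∫ s in (0 : ℝ)..t, segmentMean (fun σ => G (σ, k σ)) s

variable {G : ℝ × ℝ → ℝ} {a a' μ : ℝ} {k k' : ℝ → ℝ}

theorem contDiff_succ_volterraMap {n : ℕ} (hG : ContDiff ℝ n G) (hk : ContDiff ℝ n k) :
    ContDiff ℝ (n + 1) (volterraMap G a k) := by
  have hmean : ContDiff ℝ n (segmentMean fun σ => G (σ, k σ)) :=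
    contDiff_segmentMean (hG.comp (contDiff_id.prodMk hk))
  have hderiv (t : ℝ) : HasDerivAt (volterraMap G a k) (segmentMean (fun σ => G (σ, k σ)) t) t :=
    (hmean.continuous.integral_hasStrictDerivAt 0 t).hasDerivAt.const_add a
  refine contDiff_succ_iff_deriv.2 ⟨fun t => (hderiv t).differentiableAt, by simp, ?_⟩
  rwa [funext fun t => (hderiv t).deriv]

theorem continuous_volterraMap (hG : Continuous G) (hk : Continuous k) :
    Continuous (volterraMap G a k) :=
  (contDiff_succ_volterraMap (n := 0) (contDiff_zero.2 hG) (contDiff_zero.2 hk)).continuous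

theorem abs_volterraMap_sub_le {M : ℝ} (hM : ∀ p, |G p| ≤ M) (a : ℝ) (k : ℝ → ℝ) (t : ℝ) :
    |volterraMap G a k t - a| ≤ M * |t| := by
  have hbound := intervalIntegral.norm_integral_le_of_norm_le_const (a := (0 : ℝ)) (b := t)
    (f := segmentMean fun σ => G (σ, k σ)) (C := M)
    fun s _ => abs_segmentMean_le fun σ _ => hM (σ, k σ)
  simpa [volterraMap] using hbound

theorem integral_exp_mul {μ : ℝ} (hμ : μ ≠ 0) (a b : ℝ) :
    ∫ s in a..b, exp (μ * s) = (exp (μ * b) - exp (μ * a)) / μ := by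
  simp [intervalIntegral.integral_comp_mul_left (fun s => exp s) hμ, inv_mul_eq_div]

theorem abs_integral_le_of_abs_le_exp {φ : ℝ → ℝ} {c : ℝ} (hμ : 0 < μ)
    (hφ : ∀ s, |φ s| ≤ c * exp (μ * |s|)) (t : ℝ) :
    |∫ s in (0 : ℝ)..t, φ s| ≤ c / μ * exp (μ * |t|) := by
  have hc : 0 ≤ c := by simpa using (abs_nonneg _).trans (hφ 0)
  wlog ht : 0 ≤ t generalizing φ t
  · have hreflect := this (φ := fun s => φ (-s)) (fun s => by simpa using hφ (-s)) (-t)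
      (by linarith)
    rw [intervalIntegral.integral_comp_neg, neg_neg, neg_zero, intervalIntegral.integral_symm,
      abs_neg, abs_neg] at hreflect
    exact hreflect
  have hle : ‖∫ s in (0 : ℝ)..t, φ s‖ ≤ ∫ s in (0 : ℝ)..t, c * exp (μ * s) := by
    refine intervalIntegral.norm_integral_le_of_norm_le ht (.of_forall fun s hs => ?_)
      ((by fun_prop : Continuous fun s => c * exp (μ * s)).intervalIntegrable _ _)
    simpa [abs_of_pos hs.1] using hφ s
  rw [intervalIntegral.integral_const_mul, integral_exp_mul hμ.ne', mul_zero, exp_zero] at hle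
  calc |∫ s in (0 : ℝ)..t, φ s| ≤ c * ((exp (μ * t) - 1) / μ) := hle
    _ ≤ c / μ * exp (μ * |t|) := by
      rw [abs_of_nonneg ht, ← mul_div_assoc, div_mul_eq_mul_div]
      gcongr
      linarith

theorem abs_volterraMap_sub_volterraMap_le {L : ℝ≥0} (hG : Continuous G)
    (hL : ∀ t, LipschitzWith L fun y => G (t, y)) (hμ : 0 < μ) (hk : Continuous k)
    (hk' : Continuous k') {d : ℝ} (hd : ∀ s, |k s - k' s| ≤ d * exp (μ * |s|)) (t : ℝ) :
    |volterraMap G a k t - volterraMap G a' k' t| ≤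
      |a - a'| + L * d / μ * exp (μ * |t|) := by
  have hd0 : 0 ≤ d := by simpa using (abs_nonneg _).trans (hd 0)
  have hg : Continuous fun σ => G (σ, k σ) := by fun_prop
  have hg' : Continuous fun σ => G (σ, k' σ) := by fun_prop
  have hmean (s : ℝ) : |segmentMean (fun σ => G (σ, k σ)) s -
      segmentMean (fun σ => G (σ, k' σ)) s| ≤ L * d * exp (μ * |s|) := by
    rw [← segmentMean_sub hg hg']
    refine abs_segmentMean_le fun σ hσ => ?_
    calc |G (σ, k σ) - G (σ, k' σ)| ≤ L * |k σ - k' σ| := (hL σ).dist_le_mul _ _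
      _ ≤ L * (d * exp (μ * |s|)) := by
        gcongr
        exact (hd σ).trans (by gcongr)
      _ = L * d * exp (μ * |s|) := by ring
  calc |volterraMap G a k t - volterraMap G a' k' t|
      = |(a - a') + ∫ s in (0 : ℝ)..t, (segmentMean (fun σ => G (σ, k σ)) s -
          segmentMean (fun σ => G (σ, k' σ)) s)| := by
        rw [intervalIntegral.integral_sub ((continuous_segmentMean hg).intervalIntegrable _ _)
          ((continuous_segmentMean hg').intervalIntegrable _ _)]
        simp only [volterraMap]
        ring_nf
    _ ≤ |a - a'| + L * d / μ * exp (μ * |t|) :=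
        (abs_add_le _ _).trans (by gcongr; exact abs_integral_le_of_abs_le_exp hμ hmean t)

theorem exists_boundedContinuous_weighted_volterraMap {M : ℝ} (hG : Continuous G)
    (hM : ∀ p, |G p| ≤ M) (hμ : 0 < μ) (a : ℝ) (k : ℝ →ᵇ ℝ) :
    ∃ m : ℝ →ᵇ ℝ, ∀ t,
      m t = exp (-(μ * |t|)) * volterraMap G a (fun s => exp (μ * |s|) * k s) t := by
  have hM0 : 0 ≤ M := (abs_nonneg _).trans (hM 0)
  have hcont := continuous_volterraMap (a := a) hG
    (by fun_prop : Continuous fun s => exp (μ * |s|) * k s)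
  refine ⟨.ofNormedAddCommGroup _ ((by fun_prop : Continuous fun t : ℝ =>
    exp (-(μ * |t|))).mul hcont) (|a| + M / μ) fun t => ?_, fun t => rfl⟩
  have hsub := abs_volterraMap_sub_le hM a (fun s => exp (μ * |s|) * k s) t
  rw [Pi.mul_apply, norm_mul, norm_of_nonneg (exp_pos _).le, Real.exp_neg,
    inv_mul_le_iff₀ (exp_pos _)]
  have hone : 1 ≤ exp (μ * |t|) := one_le_exp (by positivity)
  have hlinear : |t| ≤ exp (μ * |t|) / μ := by
    rw [le_div_iff₀ hμ]
    linarith [add_one_le_exp (μ * |t|)]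
  calc |volterraMap G a (fun s => exp (μ * |s|) * k s) t| ≤ |a| + M * |t| := by
        linarith [abs_sub_abs_le_abs_sub (volterraMap G a (fun s => exp (μ * |s|) * k s) t) a]
    _ ≤ exp (μ * |t|) * |a| + M * (exp (μ * |t|) / μ) := by
        gcongr
        exact le_mul_of_one_le_left (abs_nonneg a) hone
    _ = exp (μ * |t|) * (|a| + M / μ) := by ring

theorem abs_volterraMap_weighted_sub_le {L : ℝ≥0} (hG : Continuous G)
    (hL : ∀ t, LipschitzWith L fun y => G (t, y)) (hμ : 0 < μ) (k k' : ℝ →ᵇ ℝ) (t : ℝ) :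
    |volterraMap G a (fun s => exp (μ * |s|) * k s) t -
      volterraMap G a' (fun s => exp (μ * |s|) * k' s) t| ≤
      exp (μ * |t|) * (|a - a'| + L / μ * dist k k') := by
  have hle := abs_volterraMap_sub_volterraMap_le (a := a) (a' := a') hG hL hμ
    (by fun_prop : Continuous fun s => exp (μ * |s|) * k s)
    (by fun_prop : Continuous fun s => exp (μ * |s|) * k' s) (d := dist k k') (fun s => by
      rw [← mul_sub, abs_mul, abs_exp, mul_comm]
      gcongr
      exact k.dist_coe_le_dist s) t
  calc _ ≤ |a - a'| + L * dist k k' / μ * exp (μ * |t|) := hle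
    _ ≤ exp (μ * |t|) * |a - a'| + L * dist k k' / μ * exp (μ * |t|) := by
      gcongr
      exact le_mul_of_one_le_left (abs_nonneg _) (one_le_exp (by positivity))
    _ = exp (μ * |t|) * (|a - a'| + L / μ * dist k k') := by ring

theorem exists_continuous_family_volterraMap_eq {M : ℝ} {L : ℝ≥0} (hG : Continuous G)
    (hM : ∀ p, |G p| ≤ M) (hL : ∀ t, LipschitzWith L fun y => G (t, y)) :
    ∃ H : ℝ → ℝ → ℝ, (∀ a, Continuous (H a)) ∧ (∀ a, volterraMap G a (H a) = H a) ∧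
      ∀ t, Continuous fun a => H a t := by
  obtain ⟨μ, hμ_def⟩ : ∃ μ : ℝ, μ = 2 * L + 1 := ⟨_, rfl⟩
  have hμ : 0 < μ := by rw [hμ_def]; positivity
  choose S hS using exists_boundedContinuous_weighted_volterraMap hG hM hμ
  have hunweight (a : ℝ) (k : ℝ →ᵇ ℝ) (t : ℝ) :
      exp (μ * |t|) * S a k t = volterraMap G a (fun s => exp (μ * |s|) * k s) t := by
    rw [hS, ← mul_assoc, ← exp_add, add_neg_cancel, exp_zero, one_mul]
  have hdist (a a' : ℝ) (k k' : ℝ →ᵇ ℝ) :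
      dist (S a k) (S a' k') ≤ |a - a'| + 1 / 2 * dist k k' := by
    refine (BoundedContinuousFunction.dist_le (by positivity)).2 fun t => ?_
    have hle := abs_volterraMap_weighted_sub_le (a := a) (a' := a') hG hL hμ k k' t
    rw [← hunweight, ← hunweight, ← mul_sub, abs_mul, abs_exp] at hle
    have hhalf : L / μ ≤ 1 / 2 := by
      rw [div_le_div_iff₀ hμ two_pos]
      linarith
    refine (le_of_mul_le_mul_left hle (exp_pos _)).trans ?_
    gcongr
  have hS_contracting (a : ℝ) : ContractingWith (1 / 2 : ℝ≥0) (S a) :=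
    ⟨by norm_num, .of_dist_le_mul fun k k' => by simpa using hdist a a k k'⟩
  let fix (a : ℝ) : ℝ →ᵇ ℝ := (hS_contracting a).fixedPoint
  have hfix (a : ℝ) : S a (fix a) = fix a := (hS_contracting a).fixedPoint_isFixedPt
  have hfix_lipschitz : LipschitzWith 2 fix := .of_dist_le_mul fun a a' => by
    have hle := hdist a a' (fix a) (fix a')
    rw [hfix, hfix] at hle
    rw [Real.dist_eq, NNReal.coe_ofNat]
    linarith
  refine ⟨fun a t => exp (μ * |t|) * fix a t, fun a => by fun_prop, fun a => ?_, fun t => ?_⟩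
  · ext t
    rw [← hunweight, hfix]
  · exact continuous_const.mul
      ((BoundedContinuousFunction.lipschitz_eval_const t).continuous.comp hfix_lipschitz.continuous)

end Volterra

section SingularODE

open scoped NNReal ContDiff

theorem exists_contDiff_hasDerivAt_mul_deriv {G : ℝ × ℝ → ℝ} (hG : ContDiff ℝ ∞ G)
    (hG' : HasCompactSupport G) (T b : ℝ) :
    ∃ h : ℝ → ℝ, ContDiff ℝ ∞ h ∧ h T = b ∧
      ∀ t, HasDerivAt (fun s => s * deriv h s) (G (t, h t)) t := by
  obtain ⟨M, hM⟩ := hG'.exists_bound_of_continuous hG.continuous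
  obtain ⟨L, hL⟩ := hG.lipschitzWith_of_hasCompactSupport hG' (by simp)
  obtain ⟨H, hH, hH_eq, hH_param⟩ := exists_continuous_family_volterraMap_eq hG.continuous hM
    (L := L) fun t => .of_dist_le_mul fun y z => by
      simpa [Prod.dist_eq] using hL.dist_le_mul (t, y) (t, z)
  have hH_dist (a : ℝ) : |H a T - a| ≤ M * |T| := by
    simpa only [hH_eq] using abs_volterraMap_sub_le hM a (H a) T
  obtain ⟨a, ha⟩ : b ∈ range fun a => H a T := by
    refine mem_range_of_exists_le_of_exists_ge (hH_param T) ⟨b - M * |T|, ?_⟩ ⟨b + M * |T|, ?_⟩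
    · linarith [(abs_le.1 (hH_dist (b - M * |T|))).2]
    · linarith [(abs_le.1 (hH_dist (b + M * |T|))).1]
  have hsmooth (n : ℕ) : ContDiff ℝ n (H a) := by
    induction n with
    | zero => exact contDiff_zero.2 (hH a)
    | succ n ih =>
      rw [← hH_eq a]
      exact_mod_cast contDiff_succ_volterraMap (hG.of_le (by exact_mod_cast le_top)) ih
  refine ⟨H a, contDiff_infty.2 hsmooth, ha, fun t => ?_⟩
  have hg : Continuous fun σ => G (σ, H a σ) := hG.continuous.comp (continuous_id.prodMk (hH a))
  have hderiv : deriv (H a) = segmentMean fun σ => G (σ, H a σ) := by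
    ext s
    conv_lhs => rw [← hH_eq a]
    exact (((continuous_segmentMean hg).integral_hasStrictDerivAt 0 s).hasDerivAt.const_add
      a).deriv
  rw [hderiv]
  exact hasDerivAt_mul_segmentMean hg t

-- At a negative minimum `t φ'` vanishes, and it cannot increase again before `φ` returns to `0`.
theorem nonneg_of_hasDerivAt_mul_nonpos {α β : ℝ} {φ φ' P' : ℝ → ℝ} (hα : 0 ≤ α)
    (hφ : ∀ t ∈ Icc α β, HasDerivAt φ (φ' t) t)
    (hP : ∀ t ∈ Icc α β, HasDerivAt (fun s => s * φ' s) (P' t) t)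
    (hneg : ∀ t ∈ Icc α β, φ t < 0 → P' t ≤ 0) (hleft : α = 0 ∨ 0 ≤ φ α) (hright : 0 ≤ φ β) :
    ∀ t ∈ Icc α β, 0 ≤ φ t := by
  by_contra! ⟨t₀, ht₀, hlt⟩
  have hcont : ContinuousOn φ (Icc α β) := fun t ht => (hφ t ht).continuousAt.continuousWithinAt
  obtain ⟨m, hm, hmin⟩ := isCompact_Icc.exists_isMinOn ⟨t₀, ht₀⟩ hcont
  have hφm : φ m < 0 := (hmin ht₀).trans_lt hlt
  have hmβ : m < β := hm.2.lt_of_ne (by rintro rfl; exact hφm.not_ge hright)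
  have hPm : m * φ' m = 0 := by
    rcases hm.1.eq_or_lt with rfl | h
    · rw [hleft.resolve_right hφm.not_ge, zero_mul]
    · rw [(hmin.isLocalMin (Icc_mem_nhds h hmβ)).hasDerivAt_eq_zero (hφ m hm), mul_zero]
  obtain ⟨c, ⟨hc, hφc⟩, hleast⟩ : ∃ c, IsLeast (Icc m β ∩ φ ⁻¹' Ici 0) c :=
    (isCompact_Icc.of_isClosed_subset ((hcont.mono (Icc_subset_Icc_left
      hm.1)).preimage_isClosed_of_isClosed isClosed_Icc isClosed_Ici)
      inter_subset_left).exists_isLeast ⟨β, ⟨hmβ.le, le_rfl⟩, hright⟩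
  have hsub : Icc m c ⊆ Icc α β := Icc_subset_Icc hm.1 hc.2
  have hneg_before : ∀ t ∈ Ioo m c, φ t < 0 := fun t ht => by
    by_contra! h
    exact ht.2.not_ge (hleast ⟨⟨ht.1.le, ht.2.le.trans hc.2⟩, h⟩)
  have hP_anti : AntitoneOn (fun s => s * φ' s) (Icc m c) :=
    antitoneOn_of_hasDerivWithinAt_nonpos (convex_Icc m c)
      (fun t ht => (hP t (hsub ht)).continuousAt.continuousWithinAt)
      (fun t ht => (hP t (hsub (interior_subset ht))).hasDerivWithinAt)
      fun t ht => hneg t (hsub (interior_subset ht)) (hneg_before t (interior_Icc.subset ht))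
  have hφ_anti : AntitoneOn φ (Icc m c) := by
    refine antitoneOn_of_hasDerivWithinAt_nonpos (convex_Icc m c) (hcont.mono hsub)
      (fun t ht => (hφ t (hsub (interior_subset ht))).hasDerivWithinAt) fun t ht => ?_
    have ht' := interior_Icc.subset ht
    have hle : t * φ' t ≤ m * φ' m :=
      hP_anti (left_mem_Icc.2 hc.1) (interior_subset ht) ht'.1.le
    exact nonpos_of_mul_nonpos_right (hle.trans_eq hPm) ((hα.trans hm.1).trans_lt ht'.1)
  exact (hφ_anti (left_mem_Icc.2 hc.1) (right_mem_Icc.2 hc.1) hc.1).not_gt (hφm.trans_le hφc)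

section Barriers

variable {G : ℝ × ℝ → ℝ} {T : ℝ} {h : ℝ → ℝ}

theorem le_boundary_value (hh : Differentiable ℝ h)
    (hode : ∀ t ∈ Icc 0 T, HasDerivAt (fun s => s * deriv h s) (G (t, h t)) t)
    (hG : ∀ t ∈ Icc 0 T, ∀ y, h T < y → 0 ≤ G (t, y)) : ∀ t ∈ Icc 0 T, h t ≤ h T := by
  intro t ht
  have hnonneg := nonneg_of_hasDerivAt_mul_nonpos (φ := fun t => h T - h t) le_rfl
    (fun t _ => (hh t).hasDerivAt.const_sub (h T))
    (fun t ht => by simpa only [mul_neg] using! (hode t ht).neg)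
    (fun t ht hlt => neg_nonpos.2 (hG t ht (h t) (sub_neg.1 hlt))) (Or.inl rfl)
    (sub_self (h T)).ge t ht
  exact sub_nonneg.1 hnonneg

-- The barrier `t - T + c` satisfies `t b'' + b' = 1`.
theorem linear_le_of_rhs_le_one {c : ℝ} (hh : Differentiable ℝ h)
    (hode : ∀ t ∈ Icc 0 T, HasDerivAt (fun s => s * deriv h s) (G (t, h t)) t)
    (hG : ∀ t ∈ Icc 0 T, ∀ y < c, G (t, y) ≤ 1) (hc : c ≤ h T) :
    ∀ t ∈ Icc 0 T, t - T + c ≤ h t := by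
  intro t ht
  have hnonneg := nonneg_of_hasDerivAt_mul_nonpos (φ := fun t => h t - (t - T + c)) le_rfl
    (fun t _ => (hh t).hasDerivAt.sub (((hasDerivAt_id t).sub_const T).add_const c))
    (fun t ht => by simpa only [mul_sub, mul_one] using! (hode t ht).sub (hasDerivAt_id t))
    (fun t ht hlt => sub_nonpos.2 (hG t ht (h t) (by linarith [ht.2]))) (Or.inl rfl)
    (by linarith) t ht
  linarith

end Barriers

end SingularODE

section Profile

open scoped ContDiff Topology

/-- The right-hand side `(2κ)⁻² (exp (2y) - t exp (-2y))` at `(t, y)` of the Dirichlet problem in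
the variable `t = r²`, for which `Δ = 4 (t ∂ₜ² + ∂ₜ)`; the parameter is `κ = ε / (2π)`. -/
noncomputable def profileRHS (κ : ℝ) (p : ℝ × ℝ) : ℝ :=
  (exp (2 * p.2) - p.1 * exp (-(2 * p.2))) / (2 * κ) ^ 2

/-- `h` is the profile, as a function of `t = r²`, of a radial solution on the disc `r² ≤ T`. The
equation `t h'' + h' = profileRHS κ (t, h)` is required near the closed interval `[0, T]`, so that
it can be differentiated at the endpoints. -/
structure IsProfile (T κ : ℝ) (h : ℝ → ℝ) : Prop where
  contDiff : ContDiff ℝ ∞ h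
  boundary : h T = log T / 4
  ode : ∀ t ∈ Icc 0 T, ∀ᶠ s in 𝓝 t, HasDerivAt (fun s => s * deriv h s) (profileRHS κ (s, h s)) s

variable {T κ t y : ℝ}

theorem contDiff_profileRHS (κ : ℝ) : ContDiff ℝ ∞ (profileRHS κ) := by
  unfold profileRHS
  fun_prop

theorem exp_sub_mul_exp_neg (t y : ℝ) :
    exp (2 * y) - t * exp (-(2 * y)) = (exp (4 * y) - t) * exp (-(2 * y)) := by
  rw [sub_mul, ← exp_add]
  ring_nf

theorem profileRHS_nonneg_of_log_le (hT : 0 < T) (htT : t ≤ T) (hy : log T / 4 ≤ y) (κ : ℝ) :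
    0 ≤ profileRHS κ (t, y) := by
  have hexp : T ≤ exp (4 * y) := (log_le_iff_le_exp hT).1 (by linarith)
  simp only [profileRHS, exp_sub_mul_exp_neg]
  exact div_nonneg (mul_nonneg (by linarith) (exp_pos _).le) (sq_nonneg _)

theorem profileRHS_le_one (hκ : 0 < κ) (ht : 0 ≤ t) (hy : y ≤ log (2 * κ)) :
    profileRHS κ (t, y) ≤ 1 := by
  have hexp : exp (2 * y) ≤ (2 * κ) ^ 2 := by
    rw [two_mul y, exp_add, sq]
    have := (le_log_iff_exp_le (by positivity)).1 hy
    gcongr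
  simp only [profileRHS]
  refine div_le_one_of_le₀ ?_ (sq_nonneg _)
  linarith [mul_nonneg ht (exp_pos (-(2 * y))).le]

theorem exists_isProfile (hT : 0 < T) (hκ : 0 < κ) : ∃ h, IsProfile T κ h := by
  obtain ⟨c, hc_def⟩ : ∃ c, c = min (log T / 4) (log (2 * κ)) := ⟨_, rfl⟩
  have hcT : c ≤ log T / 4 := hc_def ▸ min_le_left _ _
  have hcκ : c ≤ log (2 * κ) := hc_def ▸ min_le_right _ _
  obtain ⟨R, hR, hR_sub⟩ := (isCompact_Icc.prod
    isCompact_Icc).isBounded.subset_ball_lt (0 : ℝ) (0 : ℝ × ℝ)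
    (s := Icc 0 T ×ˢ Icc (c - T) (log T / 4))
  let χ : ContDiffBump (0 : ℝ × ℝ) := ⟨R, R + 1, hR, lt_add_one R⟩
  obtain ⟨h, hh, hhT, hode⟩ := exists_contDiff_hasDerivAt_mul_deriv
    (G := fun p => χ p * profileRHS κ p) (χ.contDiff.mul (contDiff_profileRHS κ))
    χ.hasCompactSupport.mul_right T (log T / 4)
  have hdiff : Differentiable ℝ h := hh.differentiable (by simp)
  have hupper := le_boundary_value (G := fun p => χ p * profileRHS κ p) hdiff (fun t _ => hode t)
    fun t ht y hy => mul_nonneg χ.nonneg (profileRHS_nonneg_of_log_le hT ht.2 (hhT ▸ hy.le) κ)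
  have hlower := linear_le_of_rhs_le_one (G := fun p => χ p * profileRHS κ p) hdiff
    (fun t _ => hode t) (fun t ht y hy =>
    calc χ (t, y) * profileRHS κ (t, y) ≤ χ (t, y) * 1 := by
          gcongr
          · exact χ.nonneg
          · exact profileRHS_le_one hκ ht.1 (hy.le.trans hcκ)
      _ ≤ 1 := by simpa using χ.le_one) (hcT.trans_eq hhT.symm)
  refine ⟨h, hh, hhT, fun t ht => ?_⟩
  have hmem : (t, h t) ∈ ball (0 : ℝ × ℝ) R :=
    hR_sub ⟨ht, by linarith [hlower t ht, ht.1], (hupper t ht).trans_eq hhT⟩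
  have hcont : ContinuousAt (fun s => (s, h s)) t :=
    (continuous_id.prodMk hh.continuous).continuousAt
  filter_upwards [hcont.preimage_mem_nhds (isOpen_ball.mem_nhds hmem)] with s hs
  simpa only [χ.one_of_mem_closedBall (ball_subset_closedBall hs), one_mul] using hode s

end Profile

section Qualitative

open scoped ContDiff Topology

/-- The excess of a profile over `¼ log t = ½ log r`, the zero of the right-hand side. -/
noncomputable def logExcess (h : ℝ → ℝ) (t : ℝ) : ℝ :=
  h t - log t / 4

theorem profileRHS_eq_sqrt_mul_sinh {t : ℝ} (ht : 0 < t) (κ : ℝ) (h : ℝ → ℝ) :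
    profileRHS κ (t, h t) = √t * (2 * sinh (2 * logExcess h t)) / (2 * κ) ^ 2 := by
  have hsqrt : √t = exp (log t / 2) := by rw [exp_half, exp_log ht]
  have hmul : t * exp (-(2 * h t)) = exp (log t - 2 * h t) := by
    rw [sub_eq_add_neg, exp_add, exp_log ht]
  simp only [profileRHS, logExcess]
  rw [hmul, hsqrt, sinh_eq, mul_div_cancel₀ _ two_ne_zero, mul_sub, ← exp_add, ← exp_add]
  ring_nf

namespace IsProfile

variable {T κ t a A : ℝ} {h : ℝ → ℝ}

theorem hasDerivAt (H : IsProfile T κ h) (t : ℝ) : HasDerivAt h (deriv h t) t :=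
  (H.contDiff.differentiable (by simp) t).hasDerivAt

theorem hasDerivAt_mul_deriv (H : IsProfile T κ h) (ht : t ∈ Icc 0 T) :
    HasDerivAt (fun s => s * deriv h s) (profileRHS κ (t, h t)) t :=
  (H.ode t ht).self_of_nhds

theorem hasDerivAt_logExcess (H : IsProfile T κ h) (ht : 0 < t) :
    HasDerivAt (logExcess h) ((t * deriv h t - 1 / 4) / t) t := by
  refine ((H.hasDerivAt t).sub ((hasDerivAt_log ht.ne').div_const 4)).congr_deriv ?_
  field_simp

theorem logExcess_boundary (H : IsProfile T κ h) : logExcess h T = 0 := by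
  simp only [logExcess, H.boundary, sub_self]

theorem le_log_boundary (H : IsProfile T κ h) (ht : t ∈ Icc 0 T) : h t ≤ log T / 4 := by
  rcases ht.1.trans ht.2 |>.eq_or_lt with rfl | hT
  · rw [le_antisymm ht.2 ht.1, H.boundary]
  · rw [← H.boundary]
    exact le_boundary_value (H.contDiff.differentiable (by simp))
      (fun t ht => H.hasDerivAt_mul_deriv ht)
      (fun t ht y hy => profileRHS_nonneg_of_log_le hT ht.2 (H.boundary ▸ hy.le) κ) t ht

theorem sub_add_le {c : ℝ} (H : IsProfile T κ h) (hκ : 0 < κ) (hcT : c ≤ log T / 4)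
    (hcκ : c ≤ log (2 * κ)) (ht : t ∈ Icc 0 T) : t - T + c ≤ h t :=
  linear_le_of_rhs_le_one (H.contDiff.differentiable (by simp))
    (fun t ht => H.hasDerivAt_mul_deriv ht)
    (fun t ht y hy => profileRHS_le_one hκ ht.1 (hy.le.trans hcκ)) (H.boundary ▸ hcT) t ht

theorem logExcess_nonneg (H : IsProfile T κ h) (ht : t ∈ Ioc 0 T) : 0 ≤ logExcess h t := by
  have hnear_zero : ∀ᶠ s in 𝓝[>] 0, 0 ≤ logExcess h s := by
    filter_upwards [tendsto_log_nhdsGT_zero.eventually_le_atBot (4 * (h 0 - 1)),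
      (H.contDiff.continuous.continuousAt.eventually (lt_mem_nhds (sub_one_lt (h 0)))).filter_mono
        nhdsWithin_le_nhds] with s hlog hs
    simp only [logExcess]
    linarith
  obtain ⟨δ, hδ, hδ0, hδt⟩ := (hnear_zero.and (Ioo_mem_nhdsGT ht.1)).exists
  refine nonneg_of_hasDerivAt_mul_nonpos (α := δ) (β := T) hδ0.le
    (fun s hs => H.hasDerivAt_logExcess (hδ0.trans_le hs.1))
    (P' := fun s => profileRHS κ (s, h s)) (fun s hs => ?_) (fun s hs hlt => ?_) (.inr hδ)
    H.logExcess_boundary.ge t ⟨hδt.le, ht.2⟩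
  · have hs0 := hδ0.trans_le hs.1
    refine ((H.hasDerivAt_mul_deriv ⟨hs0.le, hs.2⟩).sub_const (1 / 4)).congr_of_eventuallyEq ?_
    filter_upwards [lt_mem_nhds hs0] with σ hσ
    exact mul_div_cancel₀ _ hσ.ne'
  · rw [profileRHS_eq_sqrt_mul_sinh (hδ0.trans_le hs.1)]
    have hsinh : sinh (2 * logExcess h s) ≤ 0 := sinh_nonpos_iff.2 (by linarith)
    exact div_nonpos_of_nonpos_of_nonneg (mul_nonpos_of_nonneg_of_nonpos (sqrt_nonneg s)
      (by linarith)) (sq_nonneg _)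

theorem sqrt_mul_logExcess_le (H : IsProfile T κ h) (hκ : κ ≠ 0) (ht : t ∈ Ioc 0 T) :
    √t * logExcess h t ≤ κ ^ 2 * profileRHS κ (t, h t) := by
  have hsinh : 2 * logExcess h t ≤ sinh (2 * logExcess h t) :=
    self_le_sinh_iff.2 (by linarith [H.logExcess_nonneg ht])
  rw [profileRHS_eq_sqrt_mul_sinh ht.1]
  calc √t * logExcess h t ≤ √t * (sinh (2 * logExcess h t) / 2) := by gcongr; linarith
    _ = κ ^ 2 * (√t * (2 * sinh (2 * logExcess h t)) / (2 * κ) ^ 2) := by field_simp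

theorem profileRHS_nonneg (H : IsProfile T κ h) (ht : t ∈ Icc 0 T) :
    0 ≤ profileRHS κ (t, h t) := by
  rcases ht.1.eq_or_lt with rfl | ht0
  · simp only [profileRHS, zero_mul, sub_zero]
    positivity
  · rw [profileRHS_eq_sqrt_mul_sinh ht0]
    have hsinh : 0 ≤ sinh (2 * logExcess h t) :=
      sinh_nonneg_iff.2 (by linarith [H.logExcess_nonneg ⟨ht0, ht.2⟩])
    positivity

theorem monotoneOn_mul_deriv (H : IsProfile T κ h) :
    MonotoneOn (fun t => t * deriv h t) (Icc 0 T) :=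
  monotoneOn_of_hasDerivWithinAt_nonneg (convex_Icc 0 T)
    (fun _ ht => (H.hasDerivAt_mul_deriv ht).continuousAt.continuousWithinAt)
    (fun _ ht => (H.hasDerivAt_mul_deriv (interior_subset ht)).hasDerivWithinAt)
    fun _ ht => H.profileRHS_nonneg (interior_subset ht)

theorem mul_deriv_nonneg (H : IsProfile T κ h) (ht : t ∈ Icc 0 T) : 0 ≤ t * deriv h t := by
  simpa using H.monotoneOn_mul_deriv (left_mem_Icc.2 (ht.1.trans ht.2)) ht ht.1

-- If `t h' > 1/4` somewhere, then from there on the excess increases strictly to its boundary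
-- value `0`.
theorem mul_deriv_le (H : IsProfile T κ h) (ht : t ∈ Ico 0 T) : t * deriv h t ≤ 1 / 4 := by
  by_contra! hlt
  have ht0 : 0 < t := ht.1.lt_of_ne (by rintro rfl; norm_num at hlt)
  have hmono : StrictMonoOn (logExcess h) (Icc t T) := by
    refine strictMonoOn_of_hasDerivWithinAt_pos (convex_Icc t T)
      (fun s hs => (H.hasDerivAt_logExcess (ht0.trans_le hs.1)).continuousAt.continuousWithinAt)
      (fun s hs => (H.hasDerivAt_logExcess
        (ht0.trans_le (interior_subset hs).1)).hasDerivWithinAt) fun s hs => ?_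
    have hs' := interior_subset hs
    have hle : t * deriv h t ≤ s * deriv h s :=
      H.monotoneOn_mul_deriv ⟨ht.1, ht.2.le⟩ ⟨ht.1.trans hs'.1, hs'.2⟩ hs'.1
    exact div_pos (by linarith) (ht0.trans_le hs'.1)
  have hlt_zero := hmono (left_mem_Icc.2 ht.2.le) (right_mem_Icc.2 ht.2.le) ht.2
  rw [H.logExcess_boundary] at hlt_zero
  exact hlt_zero.not_ge (H.logExcess_nonneg ⟨ht0, ht.2.le⟩)

theorem antitoneOn_logExcess (H : IsProfile T κ h) : AntitoneOn (logExcess h) (Ioc 0 T) := by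
  refine antitoneOn_of_hasDerivWithinAt_nonpos (convex_Ioc 0 T)
    (fun s hs => (H.hasDerivAt_logExcess hs.1).continuousAt.continuousWithinAt)
    (fun s hs => (H.hasDerivAt_logExcess (interior_subset hs).1).hasDerivWithinAt) fun s hs => ?_
  rw [interior_Ioc] at hs
  exact div_nonpos_of_nonpos_of_nonneg
    (by linarith [H.mul_deriv_le ⟨hs.1.le, hs.2⟩]) hs.1.le

theorem logExcess_le_of_sub_mul_deriv_le (H : IsProfile T κ h) (hκ : κ ≠ 0) (ha : 0 < a)
    (haT : a < T) (hA : 1 / 4 - a / 2 * deriv h (a / 2) ≤ A) (ht : t ∈ Icc (3 * a / 4) T) :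
    logExcess h t ≤ 4 / (a * √(a / 2)) * (A * κ ^ 2) := by
  have hmem : ∀ s ∈ Icc (a / 2) (3 * a / 4), s ∈ Ioc 0 T := fun s hs =>
    ⟨by linarith [hs.1], by linarith [hs.2]⟩
  have hderiv : ∀ s ∈ Icc (a / 2) (3 * a / 4),
      HasDerivAt (fun s => s * deriv h s) (profileRHS κ (s, h s)) s := fun s hs =>
    H.hasDerivAt_mul_deriv (Ioc_subset_Icc_self (hmem s hs))
  obtain ⟨ξ, hξ, hslope⟩ := exists_hasDerivAt_eq_slope (fun t => t * deriv h t)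
    (fun t => profileRHS κ (t, h t)) (by linarith : a / 2 < 3 * a / 4)
    (fun s hs => (hderiv s hs).continuousAt.continuousWithinAt)
    (fun s hs => hderiv s (Ioo_subset_Icc_self hs))
  have hξ_mem := hmem ξ (Ioo_subset_Icc_self hξ)
  have ht_mem : t ∈ Ioc 0 T := ⟨by linarith [ht.1], ht.2⟩
  have hRHS : profileRHS κ (ξ, h ξ) ≤ A / (a / 4) := by
    rw [hslope, show 3 * a / 4 - a / 2 = a / 4 by ring]
    gcongr
    linarith [H.mul_deriv_le (t := 3 * a / 4) ⟨by linarith, by linarith⟩]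
  have hsqrt : 0 < √(a / 2) := sqrt_pos.2 (half_pos ha)
  have hchain : √(a / 2) * logExcess h t ≤ κ ^ 2 * (A / (a / 4)) :=
    calc √(a / 2) * logExcess h t ≤ √ξ * logExcess h ξ := by
          gcongr
          · exact H.logExcess_nonneg ht_mem
          · exact hξ.1.le
          · exact H.antitoneOn_logExcess hξ_mem ht_mem (hξ.2.le.trans ht.1)
      _ ≤ κ ^ 2 * profileRHS κ (ξ, h ξ) := H.sqrt_mul_logExcess_le hκ hξ_mem
      _ ≤ κ ^ 2 * (A / (a / 4)) := by gcongr
  rw [mul_comm, ← le_div_iff₀ hsqrt] at hchain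
  exact hchain.trans_eq (by field_simp)

theorem sub_mul_deriv_le_of_logExcess_le (H : IsProfile T κ h) (ha : 0 < a) (haT : a < T)
    (hA : logExcess h (3 * a / 4) ≤ A) : 1 / 4 - a * deriv h a ≤ 4 * A := by
  have hderiv : ∀ s ∈ Icc (3 * a / 4) a,
      HasDerivAt (logExcess h) ((s * deriv h s - 1 / 4) / s) s := fun s hs =>
    H.hasDerivAt_logExcess (by linarith [hs.1])
  obtain ⟨ξ, hξ, hslope⟩ := exists_hasDerivAt_eq_slope (logExcess h)
    (fun s => (s * deriv h s - 1 / 4) / s) (by linarith : 3 * a / 4 < a)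
    (fun s hs => (hderiv s hs).continuousAt.continuousWithinAt)
    (fun s hs => hderiv s (Ioo_subset_Icc_self hs))
  have hξ0 : 0 < ξ := by linarith [hξ.1]
  have hmono : ξ * deriv h ξ ≤ a * deriv h a :=
    H.monotoneOn_mul_deriv ⟨hξ0.le, hξ.2.le.trans haT.le⟩ ⟨ha.le, haT.le⟩ hξ.2.le
  have hquot : (1 / 4 - a * deriv h a) / a ≤ A / (a / 4) :=
    calc (1 / 4 - a * deriv h a) / a ≤ (1 / 4 - ξ * deriv h ξ) / ξ := by
          gcongr
          · linarith [H.mul_deriv_le ⟨hξ0.le, hξ.2.trans haT⟩]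
          · exact hξ.2.le
      _ = (logExcess h (3 * a / 4) - logExcess h a) / (a / 4) := by
          rw [show a / 4 = a - 3 * a / 4 by ring, ← neg_sub (logExcess h a), neg_div, ← hslope]
          ring
      _ ≤ A / (a / 4) := by
          gcongr
          linarith [H.logExcess_nonneg (t := a) ⟨ha, haT.le⟩]
  rw [div_le_div_iff₀ ha (by positivity)] at hquot
  nlinarith

end IsProfile

variable {T a : ℝ}

theorem exists_sub_mul_deriv_le_pow (n : ℕ) (ha : 0 < a) (haT : a < T) :
    ∃ C, ∀ κ ≠ 0, ∀ h, IsProfile T κ h → 1 / 4 - a * deriv h a ≤ C * (κ ^ 2) ^ n := by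
  induction n generalizing a with
  | zero =>
    refine ⟨1 / 4, fun κ _ h H => ?_⟩
    rw [pow_zero, mul_one]
    linarith [H.mul_deriv_nonneg ⟨ha.le, haT.le⟩]
  | succ n ih =>
    obtain ⟨C, hC⟩ := ih (half_pos ha) (by linarith)
    refine ⟨4 * (4 / (a * √(a / 2)) * C), fun κ hκ h H => ?_⟩
    have hexcess := H.logExcess_le_of_sub_mul_deriv_le hκ ha haT (hC κ hκ h H)
      (t := 3 * a / 4) ⟨le_rfl, by linarith⟩
    refine (H.sub_mul_deriv_le_of_logExcess_le ha haT hexcess).trans_eq ?_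
    ring

theorem exists_logExcess_le_pow (n : ℕ) (ha : 0 < a) (haT : a < T) :
    ∃ C, ∀ κ ≠ 0, ∀ h, IsProfile T κ h → ∀ t ∈ Icc a T,
      logExcess h t ≤ C * (κ ^ 2) ^ (n + 1) := by
  obtain ⟨C, hC⟩ := exists_sub_mul_deriv_le_pow n (half_pos ha) ((half_lt_self ha).trans haT)
  refine ⟨4 / (a * √(a / 2)) * C, fun κ hκ h H t ht => ?_⟩
  refine (H.logExcess_le_of_sub_mul_deriv_le hκ ha haT (hC κ hκ h H)
    ⟨by linarith [ht.1], ht.2⟩).trans_eq ?_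
  ring

end Qualitative

section DerivativeBounds

open scoped ContDiff Topology

theorem iteratedDeriv_succ_id_mul {y : ℝ → ℝ} {t : ℝ} {n : ℕ}
    (hy : ContDiffAt ℝ ((n + 1 : ℕ) : ℕ∞) y t) :
    iteratedDeriv (n + 1) (fun s => s * y s) t =
      t * iteratedDeriv (n + 1) y t + (n + 1) * iteratedDeriv n y t := by
  rw [iteratedDeriv_fun_mul contDiffAt_fun_id hy, Finset.sum_range_succ', Finset.sum_range_succ',
    Finset.sum_eq_zero fun i _ => by rw [iteratedDeriv_fun_id]; simp]
  simp [iteratedDeriv_fun_id, add_comm]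

theorem abs_iteratedDeriv_id_mul_le {y : ℝ → ℝ} {t : ℝ} {n : ℕ} (hy : ContDiffAt ℝ n y t) :
    |iteratedDeriv n (fun s => s * y s) t| ≤
      |t| * |iteratedDeriv n y t| + n * |iteratedDeriv (n - 1) y t| := by
  cases n with
  | zero => simp [abs_mul]
  | succ n =>
    rw [iteratedDeriv_succ_id_mul hy, Nat.add_sub_cancel]
    refine (abs_add_le _ _).trans_eq ?_
    rw [abs_mul, abs_mul, abs_of_nonneg (by positivity : (0 : ℝ) ≤ n + 1), Nat.cast_succ]

theorem abs_iteratedDeriv_exp_const_mul_le {h : ℝ → ℝ} {n : ℕ} (hh : ContDiff ℝ n h) (c : ℝ)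
    {C l t : ℝ} (hC : 1 ≤ C) (hl : 0 < l)
    (hbound : ∀ i, 1 ≤ i → i ≤ n → |iteratedDeriv i h t| * l ^ i ≤ C) :
    |iteratedDeriv n (fun s => exp (c * h s)) t| * l ^ n ≤
      n.factorial * max 1 |c| ^ n * C ^ n * exp (c * h t) := by
  have hexp : ContDiff ℝ n fun s => exp (c * s) := by fun_prop
  have hcomp := norm_iteratedFDeriv_comp_le hexp hh le_rfl t
    (C := max 1 |c| ^ n * exp (c * h t)) (D := C / l) (fun i hi => ?_) fun i hi₁ hi => ?_
  · rw [norm_iteratedFDeriv_eq_norm_iteratedDeriv, norm_eq_abs, div_pow] at hcomp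
    calc _ ≤ n.factorial * (max 1 |c| ^ n * exp (c * h t)) * (C ^ n / l ^ n) * l ^ n := by
          gcongr; exact hcomp
      _ = _ := by field_simp
  · rw [norm_iteratedFDeriv_eq_norm_iteratedDeriv, iteratedDeriv_exp_const_mul, norm_mul, norm_pow,
      norm_eq_abs, norm_eq_abs, abs_exp]
    gcongr
    calc |c| ^ i ≤ max 1 |c| ^ i := by gcongr; exact le_max_right _ _
      _ ≤ max 1 |c| ^ n := pow_le_pow_right₀ (le_max_left _ _) hi
  · rw [norm_iteratedFDeriv_eq_norm_iteratedDeriv, norm_eq_abs, div_pow,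
      le_div_iff₀ (by positivity)]
    exact (hbound i hi₁ hi).trans (le_self_pow₀ hC (by omega))

-- `t ^ m (Y - M)` is antitone and vanishes at `0`.
theorem le_of_mul_add_mul_le {Y Y' : ℝ → ℝ} {m : ℕ} {M t₀ : ℝ} (hm : m ≠ 0) (ht₀ : 0 ≤ t₀)
    (hY : ∀ t ∈ Icc 0 t₀, HasDerivAt Y (Y' t) t)
    (hM : ∀ t ∈ Icc 0 t₀, t * Y' t + m * Y t ≤ m * M) : Y t₀ ≤ M := by
  have hm_pos : (0 : ℝ) < m := by positivity
  rcases ht₀.eq_or_lt with rfl | ht₀_pos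
  · simpa [hm_pos] using hM 0 ⟨le_rfl, le_rfl⟩
  obtain ⟨k, rfl⟩ := Nat.exists_eq_succ_of_ne_zero hm
  have hderiv : ∀ t ∈ Icc 0 t₀, HasDerivAt (fun t => t ^ (k + 1) * (Y t - M))
      (t ^ k * (t * Y' t + (k + 1 : ℕ) * Y t - (k + 1 : ℕ) * M)) t := fun t ht =>
    ((hasDerivAt_pow (k + 1) t).mul ((hY t ht).sub_const M)).congr_deriv (by
      rw [Nat.add_sub_cancel]; ring)
  have hanti : AntitoneOn (fun t => t ^ (k + 1) * (Y t - M)) (Icc 0 t₀) :=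
    antitoneOn_of_hasDerivWithinAt_nonpos (convex_Icc 0 t₀)
      (fun t ht => (hderiv t ht).continuousAt.continuousWithinAt)
      (fun t ht => (hderiv t (interior_subset ht)).hasDerivWithinAt) fun t ht =>
        mul_nonpos_of_nonneg_of_nonpos (pow_nonneg (interior_subset ht).1 k)
          (sub_nonpos.2 (hM t (interior_subset ht)))
  have hle := hanti (left_mem_Icc.2 ht₀) (right_mem_Icc.2 ht₀) ht₀
  simp only [ne_eq, Nat.add_eq_zero_iff, one_ne_zero, and_false, not_false_eq_true, zero_pow,
    zero_mul] at hle
  exact sub_nonpos.1 (nonpos_of_mul_nonpos_right hle (pow_pos ht₀_pos _))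

theorem abs_le_of_abs_mul_add_mul_le {Y Y' : ℝ → ℝ} {m : ℕ} {M t₀ : ℝ} (hm : m ≠ 0)
    (ht₀ : 0 ≤ t₀) (hY : ∀ t ∈ Icc 0 t₀, HasDerivAt Y (Y' t) t)
    (hM : ∀ t ∈ Icc 0 t₀, |t * Y' t + m * Y t| ≤ m * M) : |Y t₀| ≤ M := by
  refine abs_le'.2 ⟨le_of_mul_add_mul_le hm ht₀ hY fun t ht => (abs_le'.1 (hM t ht)).1,
    le_of_mul_add_mul_le (Y := fun t => -Y t) hm ht₀ (fun t ht => (hY t ht).neg) fun t ht => ?_⟩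
  linarith [(abs_le'.1 (hM t ht)).2]

/-- The length scale in `t = r²` on which a profile varies: `κ²` near the centre of the disc and
`κ √t` away from it. -/
noncomputable def profileScale (κ t : ℝ) : ℝ :=
  κ * (κ + √t)

variable {T κ κ₁ t C : ℝ} {h : ℝ → ℝ}

theorem profileScale_pos (hκ : 0 < κ) : 0 < profileScale κ t :=
  mul_pos hκ (add_pos_of_pos_of_nonneg hκ (sqrt_nonneg t))

theorem sq_le_profileScale (hκ : 0 < κ) : κ ^ 2 ≤ profileScale κ t := by
  rw [profileScale, sq]
  gcongr
  exact le_add_of_nonneg_right (sqrt_nonneg t)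

theorem profileScale_le_two_mul_sq (hκ : 0 < κ) (ht : t ≤ κ ^ 2) :
    profileScale κ t ≤ 2 * κ ^ 2 := by
  have hsqrt : √t ≤ κ := (sqrt_le_left hκ.le).2 ht
  unfold profileScale
  nlinarith

theorem profileScale_sq_le (hκ : 0 < κ) (ht : κ ^ 2 ≤ t) :
    profileScale κ t ^ 2 ≤ 4 * κ ^ 2 * t := by
  have hsqrt : κ ≤ √t := le_sqrt_of_sq_le ht
  calc profileScale κ t ^ 2 ≤ (κ * (√t + √t)) ^ 2 := by unfold profileScale; gcongr
    _ = 4 * κ ^ 2 * √t ^ 2 := by ring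
    _ = 4 * κ ^ 2 * t := by rw [sq_sqrt ((sq_nonneg κ).trans ht)]

theorem profileScale_le_two_mul (hκ : 0 < κ) (ht : κ ^ 2 ≤ t) : profileScale κ t ≤ 2 * t := by
  refine le_of_sq_le_sq ((profileScale_sq_le hκ ht).trans ?_) ?_ <;> nlinarith [sq_nonneg κ]

namespace IsProfile

theorem sqrt_mul_exp_neg_le_one (H : IsProfile T κ h) (ht : t ∈ Icc 0 T) :
    √t * exp (-(2 * h t)) ≤ 1 := by
  rcases ht.1.eq_or_lt with rfl | ht0
  · simp
  · have hnonneg : 0 ≤ h t - log t / 4 := H.logExcess_nonneg ⟨ht0, ht.2⟩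
    rw [← exp_log ht0, ← exp_half, ← exp_add, exp_log ht0, exp_le_one_iff]
    linarith

theorem iteratedDeriv_ode (H : IsProfile T κ h) (j : ℕ) (ht : t ∈ Icc 0 T) :
    t * iteratedDeriv (j + 2) h t + (j + 1) * iteratedDeriv (j + 1) h t =
      iteratedDeriv j (fun s => profileRHS κ (s, h s)) t := by
  have hsmooth : ContDiff ℝ ∞ (deriv h) := (contDiff_infty_iff_deriv.1 H.contDiff).2
  have hprod := iteratedDeriv_succ_id_mul (n := j) (contDiff_infty.1 hsmooth _).contDiffAt (t := t)
  rw [← iteratedDeriv_succ', ← iteratedDeriv_succ'] at hprod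
  rw [← hprod, iteratedDeriv_succ']
  refine Filter.EventuallyEq.iteratedDeriv_eq j ?_
  filter_upwards [H.ode t ht] with s hs using hs.deriv

end IsProfile

end DerivativeBounds

section UniformDerivativeBounds

open scoped ContDiff Topology

variable {κ t C C' : ℝ} {h : ℝ → ℝ} {j : ℕ} (T κ₁ : ℝ)

theorem exists_log_sub_le : ∃ B, ∀ κ ∈ Ioc 0 κ₁, ∀ h, IsProfile T κ h →
    ∀ t ∈ Icc 0 T, log κ - B ≤ h t := by
  refine ⟨T + |log κ₁ - log T / 4|, fun κ hκ h H t ht => ?_⟩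
  have hlog : log κ ≤ log κ₁ := log_le_log hκ.1 hκ.2
  have hbarrier := H.sub_add_le (c := log κ - |log κ₁ - log T / 4|) hκ.1
    (by linarith [le_abs_self (log κ₁ - log T / 4)])
    (by
      rw [log_mul two_ne_zero hκ.1.ne']
      linarith [abs_nonneg (log κ₁ - log T / 4), log_nonneg one_le_two])
    ht
  linarith [ht.1]

theorem exists_exp_neg_mul_profileScale_le : ∃ C, ∀ κ ∈ Ioc 0 κ₁, ∀ h, IsProfile T κ h →
    ∀ t ∈ Icc 0 T, exp (-(2 * h t)) * profileScale κ t ≤ C := by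
  obtain ⟨B, hB⟩ := exists_log_sub_le T κ₁
  refine ⟨exp (2 * B) + κ₁, fun κ hκ h H t ht => ?_⟩
  have hcentre : exp (-(2 * h t)) * κ ^ 2 ≤ exp (2 * B) := by
    rw [← exp_log hκ.1, ← exp_nat_mul, ← exp_add]
    have := hB κ hκ h H t ht
    gcongr
    push_cast
    linarith
  calc exp (-(2 * h t)) * profileScale κ t
      = exp (-(2 * h t)) * κ ^ 2 + κ * (√t * exp (-(2 * h t))) := by unfold profileScale; ring
    _ ≤ exp (2 * B) + κ₁ * 1 := by
        gcongr
        · exact hκ.1.le.trans hκ.2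
        · exact hκ.2
        · exact H.sqrt_mul_exp_neg_le_one ht
    _ = exp (2 * B) + κ₁ := by rw [mul_one]

theorem exists_abs_mul_sq_le : ∃ C, ∀ κ ∈ Ioc 0 κ₁, ∀ h, IsProfile T κ h →
    ∀ t ∈ Icc 0 T, |h t| * κ ^ 2 ≤ C := by
  obtain ⟨B, hB⟩ := exists_log_sub_le T κ₁
  refine ⟨κ₁ + (|B| + |log T / 4|) * κ₁ ^ 2, fun κ hκ h H t ht => ?_⟩
  have hκ_pos : 0 < κ := hκ.1
  have hlog : -log κ ≤ κ⁻¹ := by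
    rw [← log_inv]
    exact (log_le_sub_one_of_pos (inv_pos.2 hκ_pos)).trans (sub_one_lt _).le
  have habs : |h t| ≤ κ⁻¹ + (|B| + |log T / 4|) := by
    have hinv : 0 < κ⁻¹ := inv_pos.2 hκ_pos
    refine abs_le.2 ⟨?_, ?_⟩
    · linarith [hB κ hκ h H t ht, le_abs_self B, abs_nonneg (log T / 4)]
    · linarith [H.le_log_boundary ht, le_abs_self (log T / 4), abs_nonneg B]
  calc |h t| * κ ^ 2 ≤ (κ⁻¹ + (|B| + |log T / 4|)) * κ ^ 2 := by gcongr
    _ = κ + (|B| + |log T / 4|) * κ ^ 2 := by field_simp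
    _ ≤ κ₁ + (|B| + |log T / 4|) * κ₁ ^ 2 := by gcongr <;> exact hκ.2

namespace IsProfile

variable {T}

theorem mul_exp_neg_le_sqrt (H : IsProfile T κ h) (ht : t ∈ Icc 0 T) :
    t * exp (-(2 * h t)) ≤ √T := by
  calc t * exp (-(2 * h t)) = √t * (√t * exp (-(2 * h t))) := by
        rw [← mul_assoc, mul_self_sqrt ht.1]
    _ ≤ √T * 1 := by gcongr; exacts [ht.2, H.sqrt_mul_exp_neg_le_one ht]
    _ = √T := mul_one _

end IsProfile

theorem exists_abs_iteratedDeriv_id_mul_exp_neg_le (n : ℕ) (hC : 1 ≤ C) :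
    ∃ C', ∀ κ ∈ Ioc 0 κ₁, ∀ h, IsProfile T κ h → ∀ t ∈ Icc 0 T,
      (∀ i, 1 ≤ i → i ≤ n → |iteratedDeriv i h t| * profileScale κ t ^ i ≤ C) →
      |iteratedDeriv n (fun s => s * exp (-2 * h s)) t| * profileScale κ t ^ n ≤ C' := by
  obtain ⟨A, hA⟩ := exists_exp_neg_mul_profileScale_le T κ₁
  let N : ℕ → ℝ := fun m => m.factorial * max 1 |-2| ^ m * C ^ m
  have hN : ∀ m, 0 ≤ N m := fun m => by positivity
  refine ⟨N n * √T + n * (N (n - 1) * A), fun κ hκ h H t ht hbound => ?_⟩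
  have hl : 0 < profileScale κ t := profileScale_pos hκ.1
  have hexp : ∀ m ≤ n, |iteratedDeriv m (fun s => exp (-2 * h s)) t| * profileScale κ t ^ m ≤
      N m * exp (-(2 * h t)) := fun m hm => by
    rw [← neg_mul]
    exact abs_iteratedDeriv_exp_const_mul_le (contDiff_infty.1 H.contDiff m) (-2) hC hl
      fun i hi₁ hi => hbound i hi₁ (hi.trans hm)
  have hmain : t * (|iteratedDeriv n (fun s => exp (-2 * h s)) t| * profileScale κ t ^ n) ≤
      N n * √T :=
    calc _ ≤ t * (N n * exp (-(2 * h t))) := mul_le_mul_of_nonneg_left (hexp n le_rfl) ht.1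
      _ = N n * (t * exp (-(2 * h t))) := by ring
      _ ≤ N n * √T := mul_le_mul_of_nonneg_left (H.mul_exp_neg_le_sqrt ht) (hN n)
  have hlower : n * (|iteratedDeriv (n - 1) (fun s => exp (-2 * h s)) t| * profileScale κ t ^ n) ≤
      n * (N (n - 1) * A) := by
    rcases n.eq_zero_or_pos with rfl | hn
    · simp
    rw [← pow_sub_one_mul hn.ne', ← mul_assoc (|_|)]
    refine mul_le_mul_of_nonneg_left ?_ n.cast_nonneg
    calc _ ≤ N (n - 1) * exp (-(2 * h t)) * profileScale κ t :=
          mul_le_mul_of_nonneg_right (hexp (n - 1) (n.sub_le 1)) hl.le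
      _ = N (n - 1) * (exp (-(2 * h t)) * profileScale κ t) := mul_assoc _ _ _
      _ ≤ N (n - 1) * A := mul_le_mul_of_nonneg_left (hA κ hκ h H t ht) (hN _)
  have hsmooth : ContDiff ℝ ∞ fun s => exp (-2 * h s) := (H.contDiff.const_smul (-2 : ℝ)).exp
  calc _ ≤ (t * |iteratedDeriv n (fun s => exp (-2 * h s)) t| +
          n * |iteratedDeriv (n - 1) (fun s => exp (-2 * h s)) t|) * profileScale κ t ^ n := by
        gcongr
        simpa only [abs_of_nonneg ht.1] using
          abs_iteratedDeriv_id_mul_le (contDiff_infty.1 hsmooth n).contDiffAt (t := t)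
    _ ≤ N n * √T + n * (N (n - 1) * A) := by linarith

theorem iteratedDeriv_profileRHS (hh : ContDiff ℝ ∞ h) (n : ℕ) (κ t : ℝ) :
    iteratedDeriv n (fun s => profileRHS κ (s, h s)) t =
      (iteratedDeriv n (fun s => exp (2 * h s)) t -
        iteratedDeriv n (fun s => s * exp (-2 * h s)) t) / (2 * κ) ^ 2 := by
  have hpos : ContDiff ℝ ∞ fun s => exp (2 * h s) := by fun_prop
  have hneg : ContDiff ℝ ∞ fun s => s * exp (-2 * h s) := by fun_prop
  rw [← iteratedDeriv_fun_sub (contDiff_infty.1 hpos n).contDiffAt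
    (contDiff_infty.1 hneg n).contDiffAt, ← iteratedDeriv_div_const]
  simp only [profileRHS, neg_mul]

theorem exists_abs_iteratedDeriv_profileRHS_le (n : ℕ) (hC : 1 ≤ C) :
    ∃ C', ∀ κ ∈ Ioc 0 κ₁, ∀ h, IsProfile T κ h → ∀ t ∈ Icc 0 T,
      (∀ i, 1 ≤ i → i ≤ n → |iteratedDeriv i h t| * profileScale κ t ^ i ≤ C) →
      |iteratedDeriv n (fun s => profileRHS κ (s, h s)) t| * profileScale κ t ^ n * κ ^ 2 ≤ C' := by
  obtain ⟨A, hA⟩ := exists_abs_iteratedDeriv_id_mul_exp_neg_le T κ₁ n hC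
  refine ⟨(n.factorial * max 1 |2| ^ n * C ^ n * exp (log T / 2) + A) / 4,
    fun κ hκ h H t ht hbound => ?_⟩
  have hκ_pos := hκ.1
  have hl : 0 < profileScale κ t := profileScale_pos hκ.1
  have hexp : |iteratedDeriv n (fun s => exp (2 * h s)) t| * profileScale κ t ^ n ≤
      n.factorial * max 1 |2| ^ n * C ^ n * exp (log T / 2) :=
    (abs_iteratedDeriv_exp_const_mul_le (contDiff_infty.1 H.contDiff n) 2 hC hl hbound).trans
      (by gcongr; linarith [H.le_log_boundary ht])
  rw [iteratedDeriv_profileRHS H.contDiff, abs_div, abs_of_nonneg (sq_nonneg (2 * κ))]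
  calc _ ≤ (|iteratedDeriv n (fun s => exp (2 * h s)) t| +
          |iteratedDeriv n (fun s => s * exp (-2 * h s)) t|) / (2 * κ) ^ 2 *
          profileScale κ t ^ n * κ ^ 2 := by gcongr; exact abs_sub _ _
    _ = (|iteratedDeriv n (fun s => exp (2 * h s)) t| * profileScale κ t ^ n +
          |iteratedDeriv n (fun s => s * exp (-2 * h s)) t| * profileScale κ t ^ n) / 4 := by
        field_simp; ring
    _ ≤ _ := by gcongr; exact hA κ hκ h H t ht hbound

namespace IsProfile

variable {T}

theorem hasDerivAt_iteratedDeriv (H : IsProfile T κ h) (n : ℕ) (t : ℝ) :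
    HasDerivAt (iteratedDeriv n h) (iteratedDeriv (n + 1) h t) t := by
  rw [iteratedDeriv_succ]
  exact (H.contDiff.differentiable_iteratedDeriv n (mod_cast WithTop.coe_lt_top n) t).hasDerivAt

theorem abs_iteratedDeriv_succ_mul_pow_le_of_le_sq (H : IsProfile T κ h) (hκ : 0 < κ)
    (ht : t ∈ Icc 0 T) (htκ : t ≤ κ ^ 2)
    (hRHS : ∀ s ∈ Icc 0 t,
      |iteratedDeriv j (fun s => profileRHS κ (s, h s)) s| * profileScale κ s ^ j * κ ^ 2 ≤ C) :
    |iteratedDeriv (j + 1) h t| * profileScale κ t ^ (j + 1) ≤ 2 ^ (j + 1) * C := by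
  have hC : 0 ≤ C := le_trans
    (by have := profileScale_pos (t := t) hκ; positivity) (hRHS t ⟨ht.1, le_rfl⟩)
  have hRHS' : ∀ s ∈ Icc 0 t, |s * iteratedDeriv (j + 2) h s +
      (j + 1 : ℕ) * iteratedDeriv (j + 1) h s| ≤ (j + 1 : ℕ) * (C / (κ ^ 2) ^ (j + 1)) := by
    intro s hs
    push_cast
    rw [H.iteratedDeriv_ode j ⟨hs.1, hs.2.trans ht.2⟩]
    have hle : |iteratedDeriv j (fun s => profileRHS κ (s, h s)) s| ≤ C / (κ ^ 2) ^ (j + 1) := by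
      rw [le_div_iff₀ (by positivity), pow_succ, ← mul_assoc]
      refine le_trans ?_ (hRHS s hs)
      gcongr
      exact sq_le_profileScale hκ
    exact hle.trans (le_mul_of_one_le_left (by positivity) (by simp))
  have hderiv := abs_le_of_abs_mul_add_mul_le j.succ_ne_zero ht.1
    (fun s _ => H.hasDerivAt_iteratedDeriv (j + 1) s) hRHS'
  calc _ ≤ C / (κ ^ 2) ^ (j + 1) * (2 * κ ^ 2) ^ (j + 1) := by
        have := (profileScale_pos (t := t) hκ).le
        gcongr
        exact profileScale_le_two_mul_sq hκ htκ
    _ = 2 ^ (j + 1) * C := by rw [mul_pow]; field_simp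

theorem abs_deriv_mul_le_of_sq_le (H : IsProfile T κ h) (hκ : 0 < κ) (ht : t ∈ Ico 0 T)
    (htκ : κ ^ 2 ≤ t) : |deriv h t| * profileScale κ t ≤ 1 := by
  have ht_pos : 0 < t := (by positivity : 0 < κ ^ 2).trans_le htκ
  have hnonneg : 0 ≤ deriv h t :=
    nonneg_of_mul_nonneg_right (H.mul_deriv_nonneg ⟨ht.1, ht.2.le⟩) ht_pos
  rw [abs_of_nonneg hnonneg]
  calc deriv h t * profileScale κ t ≤ deriv h t * (2 * t) := by
        gcongr; exact profileScale_le_two_mul hκ htκ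
    _ ≤ 1 := by linarith [H.mul_deriv_le ht]

theorem abs_iteratedDeriv_add_two_mul_pow_le_of_sq_le (H : IsProfile T κ h) (hκ : 0 < κ)
    (ht : t ∈ Icc 0 T) (htκ : κ ^ 2 ≤ t)
    (hRHS : |iteratedDeriv j (fun s => profileRHS κ (s, h s)) t| * profileScale κ t ^ j * κ ^ 2 ≤
      C')
    (hprev : |iteratedDeriv (j + 1) h t| * profileScale κ t ^ (j + 1) ≤ C) :
    |iteratedDeriv (j + 2) h t| * profileScale κ t ^ (j + 2) ≤ 4 * C' + 2 * ((j + 1) * C) := by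
  have ht_pos : 0 < t := (by positivity : 0 < κ ^ 2).trans_le htκ
  have hl := profileScale_pos (t := t) hκ
  set F := |iteratedDeriv j (fun s => profileRHS κ (s, h s)) t|
  have hode : t * |iteratedDeriv (j + 2) h t| ≤ F + (j + 1) * |iteratedDeriv (j + 1) h t| := by
    have hsolve := eq_sub_of_add_eq (H.iteratedDeriv_ode j ht)
    rw [← abs_of_pos ht_pos, ← abs_mul, abs_of_pos ht_pos, hsolve]
    refine (abs_sub _ _).trans_eq ?_
    rw [abs_mul, abs_of_nonneg (by positivity : (0 : ℝ) ≤ j + 1)]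
  have hC : 0 ≤ C := le_trans (by positivity) hprev
  refine le_of_mul_le_mul_left ?_ ht_pos
  calc _ = t * |iteratedDeriv (j + 2) h t| * profileScale κ t ^ (j + 2) := by ring
    _ ≤ (F + (j + 1) * |iteratedDeriv (j + 1) h t|) * profileScale κ t ^ (j + 2) := by gcongr
    _ = F * profileScale κ t ^ j * profileScale κ t ^ 2 +
          (j + 1) * (|iteratedDeriv (j + 1) h t| * profileScale κ t ^ (j + 1)) *
            profileScale κ t := by ring
    _ ≤ F * profileScale κ t ^ j * (4 * κ ^ 2 * t) + (j + 1) * C * (2 * t) := by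
        gcongr
        exacts [profileScale_sq_le hκ htκ, profileScale_le_two_mul hκ htκ]
    _ = t * (4 * (F * profileScale κ t ^ j * κ ^ 2) + 2 * ((j + 1) * C)) := by ring
    _ ≤ t * (4 * C' + 2 * ((j + 1) * C)) := by gcongr

end IsProfile

theorem exists_abs_iteratedDeriv_mul_profileScale_pow_le (n : ℕ) :
    ∃ C, 1 ≤ C ∧ ∀ κ ∈ Ioc 0 κ₁, ∀ h, IsProfile T κ h → ∀ t ∈ Ico 0 T, ∀ i, 1 ≤ i → i ≤ n →
      |iteratedDeriv i h t| * profileScale κ t ^ i ≤ C := by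
  induction n with
  | zero => exact ⟨1, le_rfl, fun _ _ _ _ _ _ i hi₁ hi => absurd hi₁ (by omega)⟩
  | succ j ih =>
    obtain ⟨C, hC, hbound⟩ := ih
    obtain ⟨C₁, hC₁⟩ := exists_abs_iteratedDeriv_profileRHS_le T κ₁ j hC
    obtain ⟨C₂, hC₂⟩ := exists_abs_iteratedDeriv_profileRHS_le T κ₁ (j - 1) hC
    refine ⟨C ⊔ 2 ^ (j + 1) * C₁ ⊔ 1 ⊔ (4 * C₂ + 2 * (j * C)), by simp [hC],
      fun κ hκ h H t ht i hi₁ hi => ?_⟩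
    have htT : t ∈ Icc 0 T := Ico_subset_Icc_self ht
    rcases hi.lt_or_eq with hlt | rfl
    · have hold := hbound κ hκ h H t ht i hi₁ (by omega)
      simp only [le_sup_iff, hold, true_or]
    rcases le_total t (κ ^ 2) with hsmall | hlarge
    · have hnew := H.abs_iteratedDeriv_succ_mul_pow_le_of_le_sq hκ.1 htT hsmall (j := j)
        fun s hs => hC₁ κ hκ h H s ⟨hs.1, hs.2.trans htT.2⟩
          (hbound κ hκ h H s ⟨hs.1, hs.2.trans_lt ht.2⟩)
      simp only [le_sup_iff, hnew, true_or, or_true]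
    cases j with
    | zero =>
      have hnew := H.abs_deriv_mul_le_of_sq_le hκ.1 ht hlarge
      simp only [zero_add, iteratedDeriv_one, pow_one, le_sup_iff, hnew, true_or, or_true]
    | succ j =>
      have hnew := H.abs_iteratedDeriv_add_two_mul_pow_le_of_sq_le hκ.1 htT hlarge (j := j)
        (hC₂ κ hκ h H t htT fun i hi₁ hi => hbound κ hκ h H t ht i hi₁ (by omega))
        (hbound κ hκ h H t ht (j + 1) (by omega) le_rfl)
      push_cast
      simp only [le_sup_iff, hnew, or_true]

end UniformDerivativeBounds

section NormSq

open scoped ContDiff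

variable {E : Type*} [NormedAddCommGroup E] [InnerProductSpace ℝ E]

theorem norm_iteratedFDeriv_norm_sq_le {n : ℕ} (hn : n ≠ 0) {x : E} {l D : ℝ} (hl : 0 ≤ l)
    (hD : 0 ≤ D) (hone : 2 * ‖x‖ ≤ l * D) (htwo : 2 ≤ l * D ^ 2) :
    ‖iteratedFDeriv ℝ n (fun y : E => ‖y‖ ^ 2) x‖ ≤ l * D ^ n := by
  have hdouble : ∀ y : E, ‖2 • innerSL ℝ y‖ = 2 * ‖y‖ := fun y => by
    rw [← ofNat_smul_eq_nsmul ℝ, norm_smul, innerSL_apply_norm, norm_ofNat]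
  have hfderiv : fderiv ℝ (fun y : E => 2 • innerSL ℝ y) =
      fun _ => ((2 : ℕ) • innerSL ℝ (E := E) : E →L[ℝ] E →L[ℝ] ℝ) :=
    funext fun y => ((2 : ℕ) • innerSL ℝ (E := E) : E →L[ℝ] E →L[ℝ] ℝ).fderiv
  match n, hn with
  | 1, _ =>
    rw [norm_iteratedFDeriv_one, fderiv_norm_sq_apply, hdouble, pow_one]
    exact hone
  | 2, _ =>
    rw [← norm_iteratedFDeriv_fderiv, funext fderiv_norm_sq_apply, norm_iteratedFDeriv_one, hfderiv]
    refine (ContinuousLinearMap.opNorm_le_bound _ zero_le_two fun y => ?_).trans htwo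
    exact (hdouble y).le
  | m + 3, _ =>
    rw [← norm_iteratedFDeriv_fderiv, funext fderiv_norm_sq_apply, ← norm_iteratedFDeriv_fderiv,
      hfderiv, iteratedFDeriv_succ_const, Pi.zero_apply, norm_zero]
    positivity

theorem norm_iteratedFDeriv_inv_profileScale_mul_norm_sq_le {κ : ℝ} (hκ : 0 < κ) {n : ℕ}
    (hn : n ≠ 0) (x : E) :
    ‖iteratedFDeriv ℝ n (fun y : E => (profileScale κ (‖x‖ ^ 2))⁻¹ * ‖y‖ ^ 2) x‖ ≤
      (2 / κ) ^ n := by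
  have hpos : 0 < profileScale κ (‖x‖ ^ 2) := profileScale_pos hκ
  have heq : profileScale κ (‖x‖ ^ 2) = κ * (κ + ‖x‖) := by
    rw [profileScale, sqrt_sq (norm_nonneg x)]
  have hsmul : iteratedFDeriv ℝ n (fun y : E => (profileScale κ (‖x‖ ^ 2))⁻¹ * ‖y‖ ^ 2) x =
      (profileScale κ (‖x‖ ^ 2))⁻¹ • iteratedFDeriv ℝ n (fun y : E => ‖y‖ ^ 2) x := by
    simpa only [smul_eq_mul] using
      iteratedFDeriv_const_smul_apply' (a := (profileScale κ (‖x‖ ^ 2))⁻¹)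
        (contDiff_norm_sq ℝ).contDiffAt
  rw [hsmul, norm_smul, norm_of_nonneg (by positivity), inv_mul_le_iff₀ hpos]
  refine norm_iteratedFDeriv_norm_sq_le hn hpos.le (by positivity) ?_ ?_
  · rw [heq]; field_simp; linarith
  · rw [heq, div_pow]; field_simp; linarith [norm_nonneg x]

theorem exists_abs_iteratedDeriv_mul_profileScale_pow_mul_sq_le (T κ₁ : ℝ) (n : ℕ) :
    ∃ C, ∀ κ ∈ Ioc 0 κ₁, ∀ h, IsProfile T κ h → ∀ t ∈ Ico 0 T, ∀ i ≤ n,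
      |iteratedDeriv i h t| * profileScale κ t ^ i * κ ^ 2 ≤ C := by
  obtain ⟨A, -, hA⟩ := exists_abs_iteratedDeriv_mul_profileScale_pow_le T κ₁ n
  obtain ⟨B, hB⟩ := exists_abs_mul_sq_le T κ₁
  refine ⟨B ⊔ A * κ₁ ^ 2, fun κ hκ h H t ht i hi => ?_⟩
  have hκ_pos := hκ.1
  rcases i.eq_zero_or_pos with rfl | hi_pos
  · rw [pow_zero, mul_one, iteratedDeriv_zero]
    exact (hB κ hκ h H t (Ico_subset_Icc_self ht)).trans le_sup_left
  · refine le_trans ?_ le_sup_right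
    have hscale : 0 < profileScale κ t := profileScale_pos hκ.1
    have hbound := hA κ hκ h H t ht i hi_pos hi
    have hA_nonneg : 0 ≤ A := (by positivity : (0 : ℝ) ≤ _).trans hbound
    gcongr
    exact hκ.2

variable (E) in
theorem exists_norm_iteratedFDeriv_profile_comp_norm_sq_le (T κ₁ : ℝ) (n : ℕ) :
    ∃ C, ∀ κ ∈ Ioc 0 κ₁, ∀ h, IsProfile T κ h → ∀ x : E, ‖x‖ ^ 2 < T → ∀ i ≤ n,
      ‖iteratedFDeriv ℝ i (fun y : E => h (‖y‖ ^ 2)) x‖ ≤ C * κ⁻¹ ^ (n + 2) := by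
  obtain ⟨A, hA⟩ := exists_abs_iteratedDeriv_mul_profileScale_pow_mul_sq_le T κ₁ n
  refine ⟨n.factorial * A * (2 * (1 ⊔ κ₁)) ^ n, fun κ hκ h H x hx i hi => ?_⟩
  have hκ_pos := hκ.1
  have ht : ‖x‖ ^ 2 ∈ Ico 0 T := ⟨sq_nonneg _, hx⟩
  obtain ⟨l, hl⟩ : ∃ l, l = profileScale κ (‖x‖ ^ 2) := ⟨_, rfl⟩
  have hl_pos : 0 < l := hl ▸ profileScale_pos hκ.1
  have hA_nonneg : 0 ≤ A :=
    (by positivity : (0 : ℝ) ≤ |h (‖x‖ ^ 2)| * l ^ 0 * κ ^ 2).trans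
      (hl ▸ hA κ hκ h H _ ht 0 n.zero_le)
  have hscaled : ContDiff ℝ i (fun s => h (l * s)) :=
    (contDiff_infty.1 H.contDiff i).comp (contDiff_const.mul contDiff_id)
  -- Rescaling the variable by `l` makes every derivative of the outer function of size `κ⁻²`.
  have hcomp : (fun s => h (l * s)) ∘ (fun y : E => l⁻¹ * ‖y‖ ^ 2) = fun y => h (‖y‖ ^ 2) := by
    funext y
    simp only [Function.comp_apply, mul_inv_cancel_left₀ hl_pos.ne']
  have houter : ∀ j ≤ i,
      ‖iteratedFDeriv ℝ j (fun s => h (l * s)) (l⁻¹ * ‖x‖ ^ 2)‖ ≤ A * κ⁻¹ ^ 2 := fun j hj => by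
    rw [norm_iteratedFDeriv_eq_norm_iteratedDeriv,
      iteratedDeriv_comp_const_mul (contDiff_infty.1 H.contDiff j), norm_mul, norm_pow, norm_eq_abs,
      norm_eq_abs, abs_of_pos hl_pos, mul_inv_cancel_left₀ hl_pos.ne', inv_pow, ← div_eq_mul_inv,
      le_div_iff₀ (by positivity), mul_comm (l ^ j)]
    exact hl ▸ hA κ hκ h H _ ht j (hj.trans hi)
  have hbound := norm_iteratedFDeriv_comp_le hscaled (contDiff_const.mul (contDiff_norm_sq ℝ))
    le_rfl x houter fun j hj _ =>
      hl ▸ norm_iteratedFDeriv_inv_profileScale_mul_norm_sq_le hκ.1 (by omega) x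
  have hone : 1 ≤ 2 * (1 ⊔ κ₁) / κ := by
    rw [one_le_div hκ.1]
    linarith [le_sup_right (a := (1 : ℝ)) (b := κ₁), hκ.1, hκ.2]
  calc ‖iteratedFDeriv ℝ i (fun y : E => h (‖y‖ ^ 2)) x‖
      ≤ i.factorial * (A * κ⁻¹ ^ 2) * (2 / κ) ^ i := hcomp ▸ hbound
    _ ≤ n.factorial * (A * κ⁻¹ ^ 2) * (2 * (1 ⊔ κ₁) / κ) ^ i := by
        gcongr
        linarith [le_sup_left (a := (1 : ℝ)) (b := κ₁)]
    _ ≤ n.factorial * (A * κ⁻¹ ^ 2) * (2 * (1 ⊔ κ₁) / κ) ^ n := by gcongr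
    _ = n.factorial * A * (2 * (1 ⊔ κ₁)) ^ n * κ⁻¹ ^ (n + 2) := by ring

end NormSq

section Laplacian

open Laplacian Topology

theorem deriv_deriv_nonpos_of_isLocalMax {f : ℝ → ℝ} {a : ℝ} (hmax : IsLocalMax f a)
    (hf : ContinuousAt f a) : deriv (deriv f) a ≤ 0 := by
  by_contra! hpos
  have hmin := isLocalMin_of_deriv_deriv_pos hpos hmax.deriv_eq_zero hf
  have hconst : f =ᶠ[𝓝 a] fun _ => f a := by
    filter_upwards [hmin, hmax] with t hle hge using le_antisymm hge hle
  simp [hconst.deriv.deriv_eq] at hpos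

theorem fderiv_fderiv_apply_nonpos_of_isLocalMax {E : Type*} [NormedAddCommGroup E]
    [NormedSpace ℝ E] {w : E → ℝ} {x : E} (hw : ContDiffAt ℝ 2 w x) (hmax : IsLocalMax w x)
    (e : E) : fderiv ℝ (fderiv ℝ w) x e e ≤ 0 := by
  obtain ⟨c, hc⟩ : ∃ c : ℝ → E, c = fun t => x + t • e := ⟨_, rfl⟩
  have hc_zero : c 0 = x := by simp [hc]
  have hline : ∀ t, HasDerivAt c e t := fun t => by
    simpa [hc] using ((hasDerivAt_id t).smul_const e).const_add x
  have htendsto : Filter.Tendsto c (𝓝 0) (𝓝 x) := hc_zero ▸ (hline 0).continuousAt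
  have hderiv : deriv (w ∘ c) =ᶠ[𝓝 0] fun t => fderiv ℝ w (c t) e := by
    filter_upwards [htendsto.eventually (hw.eventually (by simp))] with t ht
    exact ((ht.differentiableAt (by simp)).hasFDerivAt.comp_hasDerivAt t (hline t)).deriv
  have hfderiv : HasFDerivAt (fderiv ℝ w) (fderiv ℝ (fderiv ℝ w) x) (c 0) := by
    rw [hc_zero]
    exact ((hw.fderiv_right (m := 1) (by norm_num)).differentiableAt (by simp)).hasFDerivAt
  have hderiv_deriv : deriv (deriv (w ∘ c)) 0 = fderiv ℝ (fderiv ℝ w) x e e := by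
    rw [hderiv.deriv_eq]
    have happly := (hfderiv.comp_hasDerivAt 0 (hline 0)).clm_apply (hasDerivAt_const 0 e)
    rw [map_zero, add_zero] at happly
    exact happly.deriv
  rw [← hderiv_deriv]
  refine deriv_deriv_nonpos_of_isLocalMax ?_ ?_
  · filter_upwards [htendsto.eventually hmax] with t ht
    rwa [Function.comp_apply, Function.comp_apply, hc_zero]
  · exact ContinuousAt.comp (hc_zero.symm ▸ hw.continuousAt) (hline 0).continuousAt

variable {E : Type*} [NormedAddCommGroup E] [InnerProductSpace ℝ E] [FiniteDimensional ℝ E]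

theorem laplacian_eq_sum_fderiv_fderiv {ι : Type*} [Fintype ι] (b : OrthonormalBasis ι ℝ E)
    (w : E → ℝ) (x : E) : Δ w x = ∑ i, fderiv ℝ (fderiv ℝ w) x (b i) (b i) := by
  simp [InnerProductSpace.laplacian_eq_iteratedFDeriv_orthonormalBasis w b,
    iteratedFDeriv_two_apply]

theorem laplacian_nonpos_of_isLocalMax {w : E → ℝ} {x : E} (hw : ContDiffAt ℝ 2 w x)
    (hmax : IsLocalMax w x) : Δ w x ≤ 0 := by
  rw [laplacian_eq_sum_fderiv_fderiv (stdOrthonormalBasis ℝ E)]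
  exact Finset.sum_nonpos fun i _ => fderiv_fderiv_apply_nonpos_of_isLocalMax hw hmax _

theorem laplacian_comp_norm_sq {h : ℝ → ℝ} (hh : ContDiff ℝ 2 h) (x : E) :
    Δ (fun y : E => h (‖y‖ ^ 2)) x =
      4 * (‖x‖ ^ 2 * deriv (deriv h) (‖x‖ ^ 2)) +
        2 * Module.finrank ℝ E * deriv h (‖x‖ ^ 2) := by
  have hcomp : ∀ {f : ℝ → ℝ}, Differentiable ℝ f → ∀ y : E,
      HasFDerivAt (fun y : E => f (‖y‖ ^ 2)) (deriv f (‖y‖ ^ 2) • 2 • innerSL ℝ y) y :=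
    fun hf y => (hf _).hasDerivAt.comp_hasFDerivAt y (hasStrictFDerivAt_norm_sq y).hasFDerivAt
  have hfderiv : fderiv ℝ (fun y : E => h (‖y‖ ^ 2)) =
      fun y => deriv h (‖y‖ ^ 2) • 2 • innerSL ℝ y :=
    funext fun y => (hcomp (hh.differentiable (by simp)) y).fderiv
  have hlin : HasFDerivAt (fun y : E => 2 • innerSL ℝ y)
      ((2 : ℕ) • innerSL ℝ (E := E) : E →L[ℝ] E →L[ℝ] ℝ) x :=
    ((2 : ℕ) • innerSL ℝ (E := E) : E →L[ℝ] E →L[ℝ] ℝ).hasFDerivAt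
  have hderiv : ContDiff ℝ 1 (deriv h) := hh.iterate_deriv' 1 1
  have hsecond := (hcomp (hderiv.differentiable (by simp)) x).smul hlin
  let b := stdOrthonormalBasis ℝ E
  have happly : ∀ i, fderiv ℝ (fderiv ℝ fun y : E => h (‖y‖ ^ 2)) x (b i) (b i) =
      4 * deriv (deriv h) (‖x‖ ^ 2) * inner ℝ x (b i) ^ 2 + 2 * deriv h (‖x‖ ^ 2) := fun i => by
    rw [hfderiv]
    have hself : innerSL ℝ (b i) (b i) = 1 := by simp [innerSL_apply_apply]
    refine (congrArg (fun L : E →L[ℝ] E →L[ℝ] ℝ => L (b i) (b i)) hsecond.fderiv).trans ?_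
    simp only [add_apply, smul_apply, ContinuousLinearMap.smulRight_apply, coe_innerSL_apply,
      nsmul_eq_mul, Nat.cast_ofNat, smul_eq_mul, hself, mul_one]
    ring
  rw [laplacian_eq_sum_fderiv_fderiv b, Finset.sum_congr rfl fun i _ => happly i,
    Finset.sum_add_distrib, ← Finset.mul_sum]
  simp only [b.sum_sq_inner_left, Finset.sum_const, Finset.card_univ, Fintype.card_fin,
    nsmul_eq_mul]
  ring

theorem laplacian2_eq_laplacian {u : EuclideanSpace ℝ (Fin 2) → ℝ} {x : EuclideanSpace ℝ (Fin 2)}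
    (hu : ContDiffAt ℝ 2 u x) : laplacian2 u x = Δ u x := by
  have hdiff : DifferentiableAt ℝ (fderiv ℝ u) x :=
    (hu.fderiv_right (m := 1) (by norm_num)).differentiableAt (by simp)
  simp [laplacian_eq_sum_fderiv_fderiv (EuclideanSpace.basisFun (Fin 2) ℝ), laplacian2,
    fderiv_clm_apply hdiff]

end Laplacian

section Dirichlet

open scoped ContDiff Laplacian Topology

variable {r₀ ε : ℝ} {u v : EuclideanSpace ℝ (Fin 2) → ℝ}

theorem IsDirichletSolR.contDiffAt (hu : IsDirichletSolR r₀ ε u) {x : EuclideanSpace ℝ (Fin 2)}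
    (hx : x ∈ ball 0 (2 * r₀)) : ContDiffAt ℝ 2 u x :=
  contDiffAt_infty.1 (hu.2.1.contDiffAt (isOpen_ball.mem_nhds hx)) 2

theorem IsDirichletSolR.laplacian_eq (hu : IsDirichletSolR r₀ ε u)
    {x : EuclideanSpace ℝ (Fin 2)} (hx : x ∈ ball 0 (2 * r₀)) :
    Δ u x = 4 * π ^ 2 * (ε ^ 2)⁻¹ * (exp (2 * u x) - ‖x‖ ^ 2 * exp (-(2 * u x))) :=
  (laplacian2_eq_laplacian (hu.contDiffAt hx)).symm.trans (hu.2.2.1 x hx)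

theorem IsDirichletSolR.le (hε : ε ≠ 0) (hu : IsDirichletSolR r₀ ε u)
    (hv : IsDirichletSolR r₀ ε v) {x : EuclideanSpace ℝ (Fin 2)}
    (hx : x ∈ closedBall 0 (2 * r₀)) : u x ≤ v x := by
  obtain ⟨y, hy, hmax⟩ := (isCompact_closedBall _ _).exists_isMaxOn ⟨x, hx⟩ (hu.1.sub hv.1)
  suffices hle : u y ≤ v y from sub_nonpos.1 ((hmax hx).trans (sub_nonpos.2 hle))
  by_contra! hlt
  have hy_ball : y ∈ ball 0 (2 * r₀) := by
    refine (mem_closedBall.1 hy).lt_of_ne fun hy_sphere => hlt.ne' ?_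
    rw [hu.2.2.2 y hy_sphere, hv.2.2.2 y hy_sphere]
  have hlocal : IsLocalMax (u - v) y :=
    (hmax.on_subset ball_subset_closedBall).isLocalMax (isOpen_ball.mem_nhds hy_ball)
  have hcu := hu.contDiffAt hy_ball
  have hcv := hv.contDiffAt hy_ball
  have hlaplacian : Δ u y ≤ Δ v y := by
    rw [← sub_nonpos, ← hcu.laplacian_sub hcv]
    exact laplacian_nonpos_of_isLocalMax (hcu.sub hcv) hlocal
  rw [hu.laplacian_eq hy_ball, hv.laplacian_eq hy_ball] at hlaplacian
  refine hlaplacian.not_gt (mul_lt_mul_of_pos_left ?_ (by positivity))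
  have hexp : exp (2 * v y) < exp (2 * u y) := exp_lt_exp.2 (by linarith)
  have hexp_neg : ‖y‖ ^ 2 * exp (-(2 * u y)) ≤ ‖y‖ ^ 2 * exp (-(2 * v y)) := by gcongr
  linarith

theorem IsDirichletSolR.eqOn (hε : ε ≠ 0) (hu : IsDirichletSolR r₀ ε u)
    (hv : IsDirichletSolR r₀ ε v) : EqOn u v (closedBall 0 (2 * r₀)) :=
  fun _ hx => (hu.le hε hv hx).antisymm (hv.le hε hu hx)

theorem IsProfile.isDirichletSolR {κ : ℝ} {h : ℝ → ℝ} (H : IsProfile ((2 * r₀) ^ 2) κ h) :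
    IsDirichletSolR r₀ (2 * π * κ) fun x => h (‖x‖ ^ 2) := by
  have hcont : ContDiff ℝ ∞ fun x : EuclideanSpace ℝ (Fin 2) => h (‖x‖ ^ 2) :=
    H.contDiff.comp (contDiff_norm_sq ℝ)
  refine ⟨hcont.continuous.continuousOn, hcont.contDiffOn, fun x hx => ?_, fun x hx => ?_⟩
  · have ht : ‖x‖ ^ 2 ∈ Icc 0 ((2 * r₀) ^ 2) :=
      ⟨sq_nonneg _, by gcongr; exact (mem_ball_zero_iff.1 hx).le⟩
    have hderiv : ContDiff ℝ 1 (deriv h) := (contDiff_infty.1 H.contDiff 2).iterate_deriv' 1 1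
    have hode : deriv h (‖x‖ ^ 2) + ‖x‖ ^ 2 * deriv (deriv h) (‖x‖ ^ 2) =
        (exp (2 * h (‖x‖ ^ 2)) - ‖x‖ ^ 2 * exp (-(2 * h (‖x‖ ^ 2)))) / (2 * κ) ^ 2 := by
      refine Eq.trans ?_ (H.hasDerivAt_mul_deriv ht).deriv
      rw [deriv_fun_mul differentiableAt_fun_id (hderiv.differentiable (by simp) _), deriv_id'',
        one_mul]
    have hcoeff : 4 * π ^ 2 * ((2 * π * κ) ^ 2)⁻¹ = 4 * ((2 * κ) ^ 2)⁻¹ := by field_simp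
    rw [laplacian2_eq_laplacian (contDiff_infty.1 hcont 2).contDiffAt,
      laplacian_comp_norm_sq (contDiff_infty.1 H.contDiff 2), finrank_euclideanSpace_fin, hcoeff]
    linear_combination 4 * hode
  · simp only [mem_sphere_zero_iff_norm.1 hx, H.boundary, log_pow]
    push_cast
    ring

theorem IsDirichletSolR.exists_isProfile (hr₀ : 0 < r₀) (hε : 0 < ε)
    (hu : IsDirichletSolR r₀ ε u) :
    ∃ h, IsProfile ((2 * r₀) ^ 2) (ε / (2 * π)) h ∧
      EqOn u (fun x => h (‖x‖ ^ 2)) (closedBall 0 (2 * r₀)) := by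
  obtain ⟨h, H⟩ := _root_.exists_isProfile (T := (2 * r₀) ^ 2) (by positivity)
    (div_pos hε two_pi_pos)
  have hsol := H.isDirichletSolR
  rw [mul_div_cancel₀ _ two_pi_pos.ne'] at hsol
  exact ⟨h, H, hu.eqOn hε.ne' hsol⟩

end Dirichlet

section Interpolation

open scoped ContDiff Topology

theorem abs_deriv_le_of_abs_le_of_abs_deriv_deriv_le {f f' f'' : ℝ → ℝ} {p q A B : ℝ}
    (hpq : p < q) (hf : ∀ x ∈ Icc p q, HasDerivAt f (f' x) x)
    (hf' : ∀ x ∈ Icc p q, HasDerivAt f' (f'' x) x) (hA : ∀ x ∈ Icc p q, |f x| ≤ A)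
    (hB : ∀ x ∈ Icc p q, |f'' x| ≤ B) {x : ℝ} (hx : x ∈ Icc p q) :
    |f' x| ≤ 2 * A / (q - p) + B * (q - p) := by
  obtain ⟨ξ, hξ, hslope⟩ := exists_hasDerivAt_eq_slope f f' hpq
    (HasDerivAt.continuousOn hf) (fun y hy => hf y (Ioo_subset_Icc_self hy))
  have hξ_le : |f' ξ| ≤ 2 * A / (q - p) := by
    rw [hslope, abs_div, abs_of_pos (sub_pos.2 hpq)]
    gcongr
    linarith [abs_sub (f q) (f p), hA q (right_mem_Icc.2 hpq.le), hA p (left_mem_Icc.2 hpq.le)]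
  have hdist : |f' x - f' ξ| ≤ B * (q - p) := by
    refine ((convex_Icc p q).norm_image_sub_le_of_norm_hasDerivWithin_le
      (fun y hy => (hf' y hy).hasDerivWithinAt) hB (Ioo_subset_Icc_self hξ) hx).trans ?_
    have hB_nonneg : 0 ≤ B := (abs_nonneg _).trans (hB x hx)
    gcongr
    exact abs_sub_le_of_le_of_le hx.1 hx.2 hξ.1.le hξ.2.le
  linarith [abs_sub_abs_le_abs_sub (f' x) (f' ξ)]

theorem hasDerivAt_iteratedDeriv_of_contDiffAt {f : ℝ → ℝ} {x : ℝ} (hf : ContDiffAt ℝ ∞ f x)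
    (n : ℕ) :
    HasDerivAt (iteratedDeriv n f) (iteratedDeriv (n + 1) f x) x := by
  have hdiff : DifferentiableAt ℝ (iteratedFDeriv ℝ n f) x :=
    (contDiffAt_infty.1 hf (n + 1)).differentiableAt_iteratedFDeriv
      (by exact_mod_cast n.lt_succ_self)
  rw [iteratedDeriv_succ]
  exact (hdiff.continuousMultilinear_apply_const fun _ => (1 : ℝ)).hasDerivAt

theorem abs_iteratedDeriv_succ_le_of_forall_Ico {f : ℝ → ℝ} {a b δ A B x : ℝ} {k : ℕ}
    (hf : ∀ x ∈ Ico a b, ContDiffAt ℝ ∞ f x) (hδ : 0 < δ) (hδ_le : δ ≤ (b - a) / 2)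
    (hA : ∀ x ∈ Ico a b, |iteratedDeriv k f x| ≤ A)
    (hB : ∀ x ∈ Ico a b, |iteratedDeriv (k + 2) f x| ≤ B) (hx : x ∈ Ico a b) :
    |iteratedDeriv (k + 1) f x| ≤ 2 * A / δ + B * δ := by
  obtain ⟨p, hxp, hpδ, hsub⟩ : ∃ p, p ≤ x ∧ x ≤ p + δ ∧ Icc p (p + δ) ⊆ Ico a b := by
    rcases lt_or_ge (x + δ) b with hlt | hge
    · exact ⟨x, le_rfl, by linarith, Icc_subset_Ico_right hlt |>.trans (Ico_subset_Ico_left hx.1)⟩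
    · refine ⟨x - δ, by linarith, by linarith, fun y hy => ⟨?_, ?_⟩⟩ <;>
        linarith [hy.1, hy.2, hx.2]
  have hderiv : ∀ n, ∀ y ∈ Icc p (p + δ),
      HasDerivAt (iteratedDeriv n f) (iteratedDeriv (n + 1) f y) y :=
    fun n y hy => hasDerivAt_iteratedDeriv_of_contDiffAt (hf y (hsub hy)) n
  simpa only [add_sub_cancel_left] using
    abs_deriv_le_of_abs_le_of_abs_deriv_deriv_le (lt_add_of_pos_right p hδ) (hderiv k)
      (hderiv (k + 1)) (fun y hy => hA y (hsub hy)) (fun y hy => hB y (hsub hy)) ⟨hxp, hpδ⟩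

-- Landau's inequality on intervals of length a high power of `κ` trades the fast decay of one
-- derivative against the polynomial growth of the next but one.
theorem exists_abs_iteratedDeriv_le_pow {P : ℝ → (ℝ → ℝ) → Prop} {a b κ₁ : ℝ} (hab : a < b)
    (hsmooth : ∀ κ f, P κ f → ∀ x ∈ Ico a b, ContDiffAt ℝ ∞ f x)
    (hdecay : ∀ N : ℕ, ∃ C, ∀ κ ∈ Ioc 0 κ₁, ∀ f, P κ f → ∀ x ∈ Ico a b, |f x| ≤ C * κ ^ N)
    (hgrowth : ∀ n : ℕ, ∃ C, ∃ m : ℕ, ∀ κ ∈ Ioc 0 κ₁, ∀ f, P κ f → ∀ x ∈ Ico a b,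
      |iteratedDeriv n f x| ≤ C * κ⁻¹ ^ m) (k N : ℕ) :
    ∃ C, ∀ κ ∈ Ioc 0 κ₁, ∀ f, P κ f → ∀ x ∈ Ico a b, |iteratedDeriv k f x| ≤ C * κ ^ N := by
  induction k generalizing N with
  | zero => simpa only [iteratedDeriv_zero] using hdecay N
  | succ k ih =>
    obtain ⟨B, m, hB⟩ := hgrowth (k + 2)
    obtain ⟨A, hA⟩ := ih (N + (m + N))
    refine ⟨4 * A * κ₁ ^ (m + N) / (b - a) + B * (b - a) / (2 * κ₁ ^ (m + N)),
      fun κ hκ f hf x hx => ?_⟩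
    have hκ_pos := hκ.1
    have hκ₁ : 0 < κ₁ := hκ.1.trans_le hκ.2
    have hlength : 0 < b - a := sub_pos.2 hab
    have hδ_le : (b - a) / 2 * (κ / κ₁) ^ (m + N) ≤ (b - a) / 2 :=
      mul_le_of_le_one_right (by positivity)
        (pow_le_one₀ (by positivity) ((div_le_one hκ₁).2 hκ.2))
    refine (abs_iteratedDeriv_succ_le_of_forall_Ico (hsmooth κ f hf) (by positivity) hδ_le
      (hA κ hκ f hf) (hB κ hκ f hf) hx).trans_eq ?_
    have hcancel : κ⁻¹ ^ m * κ ^ m = 1 := by rw [← mul_pow, inv_mul_cancel₀ hκ.1.ne', one_pow]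
    rw [add_mul]
    congr 1
    · rw [pow_add κ N, div_pow]
      field_simp
      ring
    · rw [div_pow, pow_add κ m]
      field_simp
      linear_combination B * hcancel

theorem abs_deriv_le_of_forall_Ioo {f : ℝ → ℝ} {a b M : ℝ} (hab : a < b)
    (hf : ∀ x ∈ Ioo a b, DifferentiableAt ℝ f x) (hM : ∀ x ∈ Ioo a b, |deriv f x| ≤ M) :
    |deriv f b| ≤ M := by
  by_cases hfb : DifferentiableAt ℝ f b
  · have hslope := (hasDerivWithinAt_iff_tendsto_slope' (s := Iio b) self_notMem_Iio).1
      hfb.hasDerivAt.hasDerivWithinAt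
    refine le_of_tendsto hslope.abs ?_
    filter_upwards [Ioo_mem_nhdsLT hab] with t ht
    have hdiff : ∀ x ∈ Ioc t b, DifferentiableAt ℝ f x := fun x hx =>
      hx.2.eq_or_lt.elim (fun heq => heq ▸ hfb) fun hlt => hf x ⟨ht.1.trans hx.1, hlt⟩
    have hcont : ContinuousOn f (Icc t b) := fun x hx =>
      (hx.1.eq_or_lt.elim (fun heq => heq ▸ hf t ht)
        fun hlt => hdiff x ⟨hlt, hx.2⟩).continuousAt.continuousWithinAt
    obtain ⟨ξ, hξ, hξ_slope⟩ := exists_deriv_eq_slope f ht.2 hcont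
      fun x hx => (hdiff x (Ioo_subset_Ioc_self hx)).differentiableWithinAt
    rw [slope_comm, slope_def_field, ← hξ_slope]
    exact hM ξ ⟨ht.1.trans hξ.1, hξ.2⟩
  · obtain ⟨x, hx⟩ := nonempty_Ioo.2 hab
    rw [deriv_zero_of_not_differentiableAt hfb, abs_zero]
    exact (abs_nonneg _).trans (hM x hx)

-- Outside `Ioc a b` the function `f` is arbitrary: at `b` its derivatives may be junk values, or
-- be determined by the values of `f` to the left of `b`.
theorem abs_iteratedDeriv_le_of_eqOn_Ioc {f g : ℝ → ℝ} {a b M x : ℝ} {k : ℕ}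
    (hfg : EqOn f g (Ioc a b)) (hg : ∀ x ∈ Ioc a b, ContDiffAt ℝ ∞ g x)
    (hM : ∀ x ∈ Ioo a b, |iteratedDeriv k g x| ≤ M) (hx : x ∈ Ioc a b) :
    |iteratedDeriv k f x| ≤ M := by
  have hab : a < b := hx.1.trans_le hx.2
  have heq : ∀ n, ∀ y ∈ Ioo a b, iteratedDeriv n f y = iteratedDeriv n g y := fun n y hy =>
    Filter.EventuallyEq.iteratedDeriv_eq n
      (hfg.eventuallyEq_of_mem (Filter.mem_of_superset (Ioo_mem_nhds hy.1 hy.2)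
        Ioo_subset_Ioc_self))
  rcases hx.2.lt_or_eq with hlt | rfl
  · rw [heq k x ⟨hx.1, hlt⟩]
    exact hM x ⟨hx.1, hlt⟩
  cases k with
  | zero =>
    rw [iteratedDeriv_zero, hfg hx]
    refine le_of_tendsto ((hg x hx).continuousAt.tendsto.mono_left nhdsWithin_le_nhds).abs
      (Filter.mem_of_superset (Ioo_mem_nhdsLT hab) hM)
  | succ k =>
    rw [iteratedDeriv_succ]
    refine abs_deriv_le_of_forall_Ioo hab (fun y hy => ?_) fun y hy => ?_
    · refine (hasDerivAt_iteratedDeriv_of_contDiffAt (hg y (Ioo_subset_Ioc_self hy))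
        k).differentiableAt.congr_of_eventuallyEq ?_
      filter_upwards [Ioo_mem_nhds hy.1 hy.2] with z hz using heq k z hz
    · rw [← iteratedDeriv_succ, heq (k + 1) y hy]
      exact hM y hy

end Interpolation

section Estimates

open scoped ContDiff Topology

theorem logExcess_sq (h : ℝ → ℝ) (r : ℝ) : logExcess h (r ^ 2) = h (r ^ 2) - 1 / 2 * log r := by
  rw [logExcess, log_pow]
  push_cast
  ring

theorem IsProfile.contDiffAt_logExcess_sq {T κ r : ℝ} {h : ℝ → ℝ} (H : IsProfile T κ h)
    (hr : r ≠ 0) : ContDiffAt ℝ ∞ (fun r => logExcess h (r ^ 2)) r := by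
  simp only [logExcess_sq]
  exact (H.contDiff.comp (contDiff_id.pow 2)).contDiffAt.sub
    (contDiffAt_const.mul (contDiffAt_log.2 hr))

theorem exists_abs_iteratedDeriv_half_log_le {a b : ℝ} (ha : 0 < a) (n : ℕ) :
    ∃ M, ∀ r ∈ Icc a b, |iteratedDeriv n (fun r => 1 / 2 * log r) r| ≤ M := by
  suffices hcont : ContinuousOn (iteratedDeriv n fun r => 1 / 2 * log r) (Icc a b) from
    isCompact_Icc.exists_bound_of_continuousOn hcont
  intro r hr
  have hsmooth : ContDiffAt ℝ ∞ (fun r => 1 / 2 * log r) r :=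
    contDiffAt_const.mul (contDiffAt_log.2 (ha.trans_le hr.1).ne')
  exact (hasDerivAt_iteratedDeriv_of_contDiffAt hsmooth n).continuousAt.continuousWithinAt

theorem exists_abs_iteratedDeriv_logExcess_sq_le_inv_pow {a b : ℝ} (ha : 0 < a) (κ₁ : ℝ) (n : ℕ) :
    ∃ C, ∃ m : ℕ, ∀ κ ∈ Ioc 0 κ₁, ∀ h, IsProfile (b ^ 2) κ h → ∀ r ∈ Ico a b,
      |iteratedDeriv n (fun r => logExcess h (r ^ 2)) r| ≤ C * κ⁻¹ ^ m := by
  obtain ⟨C, hC⟩ := exists_norm_iteratedFDeriv_profile_comp_norm_sq_le ℝ (b ^ 2) κ₁ n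
  obtain ⟨M, hM⟩ := exists_abs_iteratedDeriv_half_log_le (b := b) ha n
  refine ⟨C + M * κ₁ ^ (n + 2), n + 2, fun κ hκ h H r hr => ?_⟩
  have hr_pos : 0 < r := ha.trans_le hr.1
  have hprofile := hC κ hκ h H r
    (by rw [norm_eq_abs, sq_abs]; exact pow_lt_pow_left₀ hr.2 hr_pos.le two_ne_zero) n le_rfl
  simp only [norm_iteratedFDeriv_eq_norm_iteratedDeriv, norm_eq_abs, sq_abs] at hprofile
  have hlog := hM r (Ico_subset_Icc_self hr)
  have hone : 1 ≤ κ₁ ^ (n + 2) * κ⁻¹ ^ (n + 2) := by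
    rw [← mul_pow, ← div_eq_mul_inv]
    exact one_le_pow₀ ((one_le_div hκ.1).2 hκ.2)
  have hsub : iteratedDeriv n (fun r => logExcess h (r ^ 2)) r =
      iteratedDeriv n (fun r => h (r ^ 2)) r - iteratedDeriv n (fun r => 1 / 2 * log r) r := by
    simp only [logExcess_sq]
    exact iteratedDeriv_fun_sub
      ((contDiff_infty.1 H.contDiff n).comp (contDiff_id.pow 2)).contDiffAt
      (contDiffAt_const.mul (contDiffAt_log.2 hr_pos.ne'))
  calc |iteratedDeriv n (fun r => logExcess h (r ^ 2)) r|
      ≤ C * κ⁻¹ ^ (n + 2) + M := by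
        rw [hsub]
        exact (abs_sub _ _).trans (add_le_add hprofile hlog)
    _ ≤ C * κ⁻¹ ^ (n + 2) + M * (κ₁ ^ (n + 2) * κ⁻¹ ^ (n + 2)) :=
        add_le_add le_rfl (le_mul_of_one_le_right ((abs_nonneg _).trans hlog) hone)
    _ = (C + M * κ₁ ^ (n + 2)) * κ⁻¹ ^ (n + 2) := by ring

theorem exists_abs_logExcess_sq_le_pow {a b : ℝ} (ha : 0 < a) (hab : a < b) (κ₁ : ℝ) (N : ℕ) :
    ∃ C, ∀ κ ∈ Ioc 0 κ₁, ∀ h, IsProfile (b ^ 2) κ h → ∀ r ∈ Ico a b,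
      |logExcess h (r ^ 2)| ≤ C * κ ^ N := by
  obtain ⟨C, hC⟩ := exists_logExcess_le_pow N (pow_pos ha 2)
    (pow_lt_pow_left₀ hab ha.le two_ne_zero)
  refine ⟨|C| * κ₁ ^ (N + 2), fun κ hκ h H r hr => ?_⟩
  have hκ_pos := hκ.1
  have hr_pos : 0 < r := ha.trans_le hr.1
  have hr_le : r ^ 2 ≤ b ^ 2 := pow_le_pow_left₀ hr_pos.le hr.2.le 2
  rw [abs_of_nonneg (H.logExcess_nonneg ⟨pow_pos hr_pos 2, hr_le⟩)]
  calc logExcess h (r ^ 2) ≤ C * (κ ^ 2) ^ (N + 1) :=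
        hC κ hκ.1.ne' h H _ ⟨pow_le_pow_left₀ ha.le hr.1 2, hr_le⟩
    _ ≤ |C| * (κ ^ 2) ^ (N + 1) := by gcongr; exact le_abs_self C
    _ = |C| * κ ^ (N + 2) * κ ^ N := by ring
    _ ≤ |C| * κ₁ ^ (N + 2) * κ ^ N := by gcongr; exact hκ.2

theorem exists_abs_iteratedDeriv_logExcess_sq_le_pow {a b : ℝ} (ha : 0 < a) (hab : a < b)
    (κ₁ : ℝ) (k N : ℕ) :
    ∃ C, ∀ κ ∈ Ioc 0 κ₁, ∀ h, IsProfile (b ^ 2) κ h → ∀ r ∈ Ico a b,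
      |iteratedDeriv k (fun r => logExcess h (r ^ 2)) r| ≤ C * κ ^ N := by
  obtain ⟨C, hC⟩ := exists_abs_iteratedDeriv_le_pow (κ₁ := κ₁)
    (P := fun κ f => ∃ h, IsProfile (b ^ 2) κ h ∧ f = fun r => logExcess h (r ^ 2)) hab
    (by rintro κ _ ⟨h, H, rfl⟩ r hr; exact H.contDiffAt_logExcess_sq (ha.trans_le hr.1).ne')
    (fun N => (exists_abs_logExcess_sq_le_pow ha hab κ₁ N).imp fun C hC => by
      rintro κ hκ _ ⟨h, H, rfl⟩; exact hC κ hκ h H)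
    (fun n => (exists_abs_iteratedDeriv_logExcess_sq_le_inv_pow ha κ₁ n).imp fun C =>
      Exists.imp fun m hC => by rintro κ hκ _ ⟨h, H, rfl⟩; exact hC κ hκ h H) k N
  exact ⟨C, fun κ hκ h H => hC κ hκ _ ⟨h, H, rfl⟩⟩

variable {r₀ : ℝ}

theorem IsRadialR.eqOn_logExcess {u : EuclideanSpace ℝ (Fin 2) → ℝ} {g h : ℝ → ℝ}
    (hg : IsRadialR r₀ u g)
    (hu : EqOn u (fun x => h (‖x‖ ^ 2)) (closedBall 0 (2 * r₀))) :
    EqOn (fun r => g r - 1 / 2 * log r) (fun r => logExcess h (r ^ 2)) (Icc 0 (2 * r₀)) := by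
  intro r hr
  have hnorm : ‖EuclideanSpace.single (0 : Fin 2) r‖ = r := by
    rw [PiLp.norm_single, norm_of_nonneg hr.1]
  have hmem : EuclideanSpace.single (0 : Fin 2) r ∈ closedBall 0 (2 * r₀) := by
    rw [mem_closedBall_zero_iff, hnorm]
    exact hr.2
  have heq := (hg _ hmem).symm.trans (hu hmem)
  simp only [hnorm] at heq
  simp only [heq, logExcess_sq]

theorem exists_abs_iteratedDeriv_radial_sub_half_log_le (hr₀ : 0 < r₀) (ε₁ : ℝ) (k N : ℕ) :
    ∃ C, ∀ ε ∈ Ioc 0 ε₁, ∀ u g, IsDirichletSolR r₀ ε u → IsRadialR r₀ u g →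
      ∀ r ∈ Icc r₀ (2 * r₀), |iteratedDeriv k (fun s => g s - 1 / 2 * log s) r| ≤ C * ε ^ N := by
  obtain ⟨C, hC⟩ := exists_abs_iteratedDeriv_logExcess_sq_le_pow (half_pos hr₀)
    (by linarith : r₀ / 2 < 2 * r₀) (ε₁ / (2 * π)) k N
  refine ⟨C / (2 * π) ^ N, fun ε hε u g hu hg r hr => ?_⟩
  obtain ⟨h, H, huh⟩ := hu.exists_isProfile hr₀ hε.1
  have hκ : ε / (2 * π) ∈ Ioc 0 (ε₁ / (2 * π)) :=
    ⟨div_pos hε.1 two_pi_pos, by gcongr; exact hε.2⟩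
  have hsub : Ioc (r₀ / 2) (2 * r₀) ⊆ Icc 0 (2 * r₀) := fun s hs => ⟨by linarith [hs.1], hs.2⟩
  refine (abs_iteratedDeriv_le_of_eqOn_Ioc ((hg.eqOn_logExcess huh).mono hsub)
    (fun s hs => H.contDiffAt_logExcess_sq ((half_pos hr₀).trans hs.1).ne')
    (fun s hs => hC _ hκ h H s (Ioo_subset_Ico_self hs))
    ⟨by linarith [hr.1], hr.2⟩).trans_eq ?_
  rw [div_pow]
  ring

theorem exists_norm_iteratedFDeriv_le (hr₀ : 0 < r₀) (ε₁ : ℝ) (k : ℕ) :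
    ∃ C, ∀ ε ∈ Ioc 0 ε₁, ∀ u, IsDirichletSolR r₀ ε u → ∀ i ≤ k, ∀ x ∈ ball 0 (2 * r₀),
      ‖iteratedFDeriv ℝ i u x‖ ≤ C * ε ^ (-(k : ℤ) - 2) := by
  obtain ⟨C, hC⟩ := exists_norm_iteratedFDeriv_profile_comp_norm_sq_le
    (EuclideanSpace ℝ (Fin 2)) ((2 * r₀) ^ 2) (ε₁ / (2 * π)) k
  refine ⟨C * (2 * π) ^ (k + 2), fun ε hε u hu i hi x hx => ?_⟩
  obtain ⟨h, H, huh⟩ := hu.exists_isProfile hr₀ hε.1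
  have hκ : ε / (2 * π) ∈ Ioc 0 (ε₁ / (2 * π)) :=
    ⟨div_pos hε.1 two_pi_pos, by gcongr; exact hε.2⟩
  have heq : u =ᶠ[𝓝 x] fun y => h (‖y‖ ^ 2) :=
    huh.eventuallyEq_of_mem (closedBall_mem_nhds_of_mem hx)
  have hzpow : ε ^ (-(k : ℤ) - 2) = ε⁻¹ ^ (k + 2) := by
    rw [inv_pow, ← zpow_natCast, ← zpow_neg]
    congr 1
    push_cast
    ring
  rw [(heq.iteratedFDeriv ℝ i).eq_of_nhds, hzpow]
  refine (hC _ hκ h H x (by gcongr; exact mem_ball_zero_iff.1 hx) i hi).trans_eq ?_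
  rw [inv_div, div_pow, inv_pow]
  ring

theorem exists_isDirichletSolR_isRadialR (hr₀ : 0 < r₀) {ε : ℝ} (hε : 0 < ε) :
    ∃ u g, IsDirichletSolR r₀ ε u ∧ IsRadialR r₀ u g := by
  obtain ⟨h, H⟩ := exists_isProfile (T := (2 * r₀) ^ 2) (by positivity) (div_pos hε two_pi_pos)
  have hsol := H.isDirichletSolR
  rw [mul_div_cancel₀ _ two_pi_pos.ne'] at hsol
  exact ⟨_, fun r => h (r ^ 2), hsol, fun _ _ => rfl⟩

end Estimates

theorem stmt_8_general (r₀ : ℝ) (hr₀ : 0 < r₀) :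
    (∀ ε : ℝ, 0 < ε → ∃ u g, IsDirichletSolR r₀ ε u ∧ IsRadialR r₀ u g) ∧
    (∀ ε : ℝ, 0 < ε → ∀ u v, IsDirichletSolR r₀ ε u → IsDirichletSolR r₀ ε v →
      EqOn u v (closedBall 0 (2 * r₀))) ∧
    (∀ (ε₁ : ℝ) (k N : ℕ), ∃ C : ℝ, ∀ ε ∈ Ioc 0 ε₁,
      ∀ u g, IsDirichletSolR r₀ ε u → IsRadialR r₀ u g →
        ∀ r ∈ Icc r₀ (2 * r₀), |iteratedDeriv k (fun s => g s - 1 / 2 * log s) r| ≤ C * ε ^ N) ∧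
    (∀ (ε₁ : ℝ) (k : ℕ), ∃ C : ℝ, ∀ ε ∈ Ioc 0 ε₁, ∀ u, IsDirichletSolR r₀ ε u →
      ∀ i ≤ k, ∀ x ∈ ball 0 (2 * r₀),
        ‖iteratedFDeriv ℝ i u x‖ ≤ C * ε ^ (-(k : ℤ) - 2)) :=
  ⟨fun _ hε => exists_isDirichletSolR_isRadialR hr₀ hε,
    fun _ hε _ _ hu hv => hu.eqOn hε.ne' hv,
    exists_abs_iteratedDeriv_radial_sub_half_log_le hr₀,
    exists_norm_iteratedFDeriv_le hr₀⟩

/-- for every `ε > 0` the Dirichlet problem on `B_{2r₀}(0)` has a unique smooth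
radially symmetric solution `u_ε`, and it satisfies:
(1) with `v_ε(r) = u_ε(r) − (1/2)·ln r`, for any integers `l > k ≥ 0` there is `C(r₀,l,k)`
with `sup_{r ∈ [r₀,2r₀]} |v_ε^{(k)}(r)| ≤ C·ε^{l−k}` for all `0 < ε < 1/8`;
(2) for any `k ≥ 0` and `0 < R ≤ 2r₀` there is `C(r₀,R,k)` with
`‖u_ε‖_{C^k(B_R(0))} ≤ C·ε^{−k−2}` for all `0 < ε < 1/8`. -/
theorem stmt_8 (r₀ : ℝ) (hr₀ : 0 < r₀) :
    (∀ ε : ℝ, 0 < ε → ∃ u g, IsDirichletSolR r₀ ε u ∧ IsRadialR r₀ u g) ∧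
    (∀ ε : ℝ, 0 < ε → ∀ u v gu gv,
      IsDirichletSolR r₀ ε u → IsRadialR r₀ u gu →
      IsDirichletSolR r₀ ε v → IsRadialR r₀ v gv →
      ∀ x ∈ closedBall (0 : EuclideanSpace ℝ (Fin 2)) (2 * r₀), u x = v x) ∧
    (∀ l k : ℕ, k < l → ∃ C : ℝ, ∀ ε : ℝ, 0 < ε → ε < 1/8 →
      ∀ u g, IsDirichletSolR r₀ ε u → IsRadialR r₀ u g →
        ∀ r ∈ Icc r₀ (2 * r₀),
          |iteratedDeriv k (fun s => g s - (1/2) * Real.log s) r| ≤ C * ε ^ (l - k)) ∧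
    (∀ k : ℕ, ∀ R : ℝ, 0 < R → R ≤ 2 * r₀ → ∃ C : ℝ, ∀ ε : ℝ, 0 < ε → ε < 1/8 →
      ∀ u g, IsDirichletSolR r₀ ε u → IsRadialR r₀ u g →
        ∀ i ≤ k, ∀ x ∈ ball (0 : EuclideanSpace ℝ (Fin 2)) R,
          ‖iteratedFDeriv ℝ i u x‖ ≤ C * ε ^ (-(k : ℤ) - 2)) := by
  obtain ⟨hexists, hunique, hdecay, hgrowth⟩ := stmt_8_general r₀ hr₀
  exact ⟨hexists, fun ε hε u v _ _ hu _ hv _ x hx => hunique ε hε u v hu hv hx,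
    fun l k _ => (hdecay (1 / 8) k (l - k)).imp fun C hC ε hε hlt => hC ε ⟨hε, hlt.le⟩,
    fun k R _ hR => (hgrowth (1 / 8) k).imp fun C hC ε hε hlt u _ hu _ i hi x hx =>
      hC ε ⟨hε, hlt.le⟩ u hu i hi x (ball_subset_ball hR hx)⟩
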